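/- arXiv:2003.01967 — 3 statements merged into one kernel-verified Lean document; each statement's English description precedes it below -/
import Mathlib

section
/- Let d be a positive integer, d′ = d/(d−1) (d′ = ∞ if d = 1), and let I ⊆ ℝ be an open bounded interval. Assume f : I → ℂ is continuous and f^d = g for some g ∈ C^{d−1,1}(Ī). Then f is absolutely continuous on I, its derivative f′ belongs to the weak Lebesgue space L^{d′}_w(I), and ‖f′‖_{d′,w,I} ≤ C(d) · max{ (Lip_I(g^{(d−1)}))^{1/d} · |I|^{1/d′}, ‖g′‖_{L^∞(I)}^{1/d} }, where C(d) depends only on d. -/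
/-! Write `d = k + 2`; for `d = 1` the function `f = g` is Lipschitz and there is nothing to do.

Where `f ≠ 0` one has `f' = g' / (d f^(d-1))`, so `|f'| > r` forces one of `|Re g'|`, `|Im g'|` to
exceed `r |g|^((d-1)/d)`. Zeros of `f`, `Re g` or `Im g` at which the derivative is nonzero are
isolated, hence countable and negligible. Everything thus reduces to a real estimate
(`volume_superlevel_le`), applied to `±Re g` and `±Im g`: if `G` is a real `C^(d-1,1)` function with
`Lip (G^(d-1)) ≤ L` and `|G'| ≤ M`, then
`A = {G > 0, |G'| > r G^((d-1)/d)}` has measure at most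
`d (d/r) (1/r)^(1/(d-1)) (L^(1/(d-1)) |I| + M^(1/(d-1)))`.

The real estimate is proved on the components of `{G' ≠ 0}`, on each of which `G` is injective.
If `|G'| ≤ X` on a component, then on its part inside `A` the function `φ = G^(1/d)` has
`|φ'| > r/d` and takes values in `[0, (X/r)^(1/(d-1))]`, so this part has measure at most
`(d/r) (X/r)^(1/(d-1))` (`volume_le_of_injOn`). A compact subset of `A` meets only finitely many
components. A block of `d` consecutive ones contains `d - 1` zeros of `G'` between its members, so
iterating Rolle (`abs_le_of_zeros`) gives `|G'| ≤ L ℓ^(d-1)` on a hull of length `ℓ`; one may take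
`X^(1/(d-1)) = L^(1/(d-1)) ℓ`. The hulls overlap at most `d` times, so their lengths sum to at most
`d |I|` (`sum_shift_sub_le`). The last `d - 1` components are not followed by enough others, and
there one takes `X = M`.

Summing up, `|{|f'| > r}| ≤ c r^(-d/(d-1))` (`volume_deriv_gt_le`), which is the weak-type bound. As
`d/(d-1) > 1`, the layer-cake formula makes `f'` integrable. Since `f` is differentiable off its
zeros, `|f b - f a| ≤ ∫ |f'|` over `(a, b)`: split at the first and the last zero of `f` in `[a, b]`
(`enorm_sub_le_lintegral`). Absolute continuity of `f` follows from that of the integral. -/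

open MeasureTheory Set
open scoped ENNReal NNReal

noncomputable section

/-- The Lipschitz seminorm (best Lipschitz constant) of `f` on `s`. -/
def lipConstOn {E : Type*} [NormedAddCommGroup E] (f : ℝ → E) (s : Set ℝ) : ℝ :=
  sInf {C : ℝ | 0 ≤ C ∧ ∀ x ∈ s, ∀ y ∈ s, ‖f x - f y‖ ≤ C * |x - y|}

/-- `f` is of class `C^{k,1}` on `s`: it is `C^k` and the `k`-th derivative is Lipschitz. -/
def CkLipOn {E : Type*} [NormedAddCommGroup E] [NormedSpace ℝ E] (k : ℕ) (f : ℝ → E)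
    (s : Set ℝ) : Prop :=
  ContDiffOn ℝ k f s ∧ ∃ C : ℝ, 0 ≤ C ∧ ∀ x ∈ s, ∀ y ∈ s,
    ‖iteratedDerivWithin k f s x - iteratedDerivWithin k f s y‖ ≤ C * |x - y|

/-- The `C^{k,1}` norm of `f` on `s`:
`max_{j ≤ k} sup_s ‖f^{(j)}‖ + Lip_s (f^{(k)})`. -/
def ckLipNorm {E : Type*} [NormedAddCommGroup E] [NormedSpace ℝ E] (k : ℕ) (f : ℝ → E)
    (s : Set ℝ) : ℝ :=
  (⨆ j : Fin (k + 1), ⨆ x : s, ‖iteratedDerivWithin (j : ℕ) f s (x : ℝ)‖) +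
    lipConstOn (iteratedDerivWithin k f s) s

/-- Absolute continuity of `f` on a set `s ⊆ ℝ`. -/
def AbsolutelyContinuousOn {E : Type*} [NormedAddCommGroup E] (f : ℝ → E) (s : Set ℝ) : Prop :=
  ∀ ε > (0 : ℝ), ∃ δ > (0 : ℝ), ∀ (m : ℕ) (a b : Fin m → ℝ),
    (∀ i, a i ≤ b i) → (∀ i, Set.Icc (a i) (b i) ⊆ s) →
    (Pairwise fun i j => Set.Ioo (a i) (b i) ∩ Set.Ioo (a j) (b j) = ∅) →
    (∑ i, (b i - a i)) < δ → (∑ i, ‖f (b i) - f (a i)‖) < ε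

/-- The polynomial map `V = ℂ^N → ℂ^n` associated with a family of polynomials. -/
def polyMap {N n : ℕ} (σ : Fin n → MvPolynomial (Fin N) ℂ) (v : Fin N → ℂ) : Fin n → ℂ :=
  fun j => MvPolynomial.eval v (σ j)

/-- `σ` is a system of basic invariants for the representation `ρ` of `G` on `ℂ^N`:
each `σ j` is `G`-invariant, and every `G`-invariant polynomial lies in the subalgebra
generated by the `σ j`. -/
def IsBasicInvariantSystem {G : Type*} [Group G] {N n : ℕ}
    (ρ : Representation ℂ G (Fin N → ℂ)) (σ : Fin n → MvPolynomial (Fin N) ℂ) : Prop :=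
  (∀ j g v, MvPolynomial.eval (ρ g v) (σ j) = MvPolynomial.eval v (σ j)) ∧
  (∀ q : MvPolynomial (Fin N) ℂ,
    (∀ g v, MvPolynomial.eval (ρ g v) q = MvPolynomial.eval v q) →
      q ∈ Algebra.adjoin ℂ (Set.range σ))

/-- The weak `L^p` quasinorm of `f` on `s` (with respect to Lebesgue measure):
`sup_{r>0} r · |{t ∈ s : |f t| > r}|^{1/p}`. -/
def weakLpNorm {E : Type*} [NormedAddCommGroup E] (p : ℝ) (f : ℝ → E) (s : Set ℝ) : ℝ≥0∞ :=
  ⨆ r : ℝ≥0, (r : ℝ≥0∞) * (volume {t ∈ s | (r : ℝ) < ‖f t‖}) ^ (1 / p)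

open Filter Topology

/-! ### Iterated Rolle -/

/-- Iterated Rolle: with `h j` standing for the `j`-th derivative of `h 0` and `h k` being
`L`-Lipschitz, `k + 1` zeros of `h 0` in `[a, b]` force `|h 0| ≤ L (b - a)^(k+1)` there. Rolle
gives `k` zeros of `h 1`, and the induction bound on `h 1` is integrated from a zero of `h 0`. -/
lemma abs_le_of_zeros {α β L : ℝ} (hL : 0 ≤ L) (k : ℕ) :
    ∀ (h : ℕ → ℝ → ℝ),
      (∀ j < k, ∀ x ∈ Icc α β, HasDerivWithinAt (h j) (h (j + 1) x) (Icc α β) x) →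
      (∀ x ∈ Icc α β, ∀ y ∈ Icc α β, |h k x - h k y| ≤ L * |x - y|) →
      ∀ a b : ℝ, Icc a b ⊆ Icc α β → ∀ z : ℕ → ℝ,
        (∀ j < k, z j < z (j + 1)) → (∀ j ≤ k, z j ∈ Icc a b ∧ h 0 (z j) = 0) →
        ∀ x ∈ Icc a b, |h 0 x| ≤ L * (b - a) ^ (k + 1) := by
  induction k with
  | zero =>
    intro h _ hlip a b hab z _ hz x hx
    obtain ⟨hz0, hz1⟩ := hz 0 le_rfl
    have := hlip x (hab hx) (z 0) (hab hz0)
    rw [hz1, sub_zero] at this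
    refine this.trans ?_
    rw [zero_add, pow_one]
    refine mul_le_mul_of_nonneg_left ?_ hL
    rw [abs_le]
    constructor <;> linarith [hx.1, hx.2, hz0.1, hz0.2]
  | succ k ih =>
    intro h hd hlip a b hab z hz1 hz2 x hx
    have hcont : ContinuousOn (h 0) (Icc α β) := fun y hy =>
      (hd 0 (Nat.succ_pos k) y hy).continuousWithinAt
    have hroll : ∀ j, ∃ w, j ≤ k → w ∈ Ioo (z j) (z (j + 1)) ∧ h 1 w = 0 := by
      intro j
      by_cases hj : j ≤ k
      · have h0 := hz2 j (by omega)
        have h1 := hz2 (j + 1) (by omega)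
        have hsub : Icc (z j) (z (j + 1)) ⊆ Icc α β :=
          (Icc_subset_Icc h0.1.1 h1.1.2).trans hab
        obtain ⟨w, hw, hw0⟩ := exists_hasDerivAt_eq_zero (f := h 0) (f' := h 1)
          (hz1 j (by omega)) (hcont.mono hsub) (by rw [h0.2, h1.2]) (fun y hy =>
            (hd 0 (Nat.succ_pos k) y (hsub (Ioo_subset_Icc_self hy))).hasDerivAt
              (mem_of_superset (Icc_mem_nhds hy.1 hy.2) hsub))
        exact ⟨w, fun _ => ⟨hw, hw0⟩⟩
      · exact ⟨0, fun h => absurd h hj⟩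
    choose w hw using hroll
    have hb := ih (fun j => h (j + 1)) (fun j hj => hd (j + 1) (by omega)) hlip a b hab w
      (fun j hj => ((hw j (by omega)).1.2).trans ((hw (j + 1) (by omega)).1.1))
      (fun j hj => ⟨⟨((hz2 j (by omega)).1.1).trans (hw j hj).1.1.le,
        ((hw j hj).1.2.le).trans ((hz2 (j + 1) (by omega)).1.2)⟩, (hw j hj).2⟩)
    obtain ⟨hz0, hz00⟩ := hz2 0 (by omega)
    have hmv := (convex_Icc a b).norm_image_sub_le_of_norm_hasDerivWithin_le
      (f := h 0) (f' := h 1) (C := L * (b - a) ^ (k + 1))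
      (fun y hy => (hd 0 (Nat.succ_pos k) y (hab hy)).mono hab)
      (fun y hy => by simpa using hb y hy) hz0 hx
    rw [hz00, sub_zero, Real.norm_eq_abs, Real.norm_eq_abs] at hmv
    refine hmv.trans ?_
    rw [pow_succ _ (k + 1), ← mul_assoc]
    have hba : 0 ≤ b - a := by linarith [hx.1, hx.2]
    refine mul_le_mul_of_nonneg_left ?_ (by positivity)
    rw [abs_le]
    constructor <;> linarith [hx.1, hx.2, hz0.1, hz0.2]

/-! ### Nondegenerate zeros and change of variables -/

/-- A zero with nonzero derivative is isolated, so such zeros form a discrete subset of `ℝ`. -/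
lemma countable_zeros_of_deriv_ne_zero {E : Type*} [NormedAddCommGroup E] [NormedSpace ℝ E]
    (h : ℝ → E) : {t | h t = 0 ∧ ∃ h', h' ≠ 0 ∧ HasDerivAt h h' t}.Countable := by
  set S := {t | h t = 0 ∧ ∃ h', h' ≠ 0 ∧ HasDerivAt h h' t} with hS
  have : DiscreteTopology S := by
    rw [discreteTopology_subtype_iff]
    rintro x ⟨_, h', hne, hd⟩
    rw [← disjoint_iff, disjoint_principal_right]
    filter_upwards [hd.eventually_ne (c := 0) hne] with y hy hyS using hy hyS.1
  exact (TopologicalSpace.separableSpace_iff_countable (α := S)).1 inferInstance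

/-- Change of variables under `G^(1/d)`: on `B` its derivative exceeds `r / d` in absolute value,
and `r G^((d-1)/d) < M` bounds its values by `(M / r)^(1/(d-1))`. -/
lemma volume_le_of_injOn {d : ℝ} (hd : 1 < d) {r M : ℝ} (hr : 0 < r)
    {G G' : ℝ → ℝ} {B : Set ℝ} (hB : MeasurableSet B)
    (hder : ∀ t ∈ B, HasDerivAt G (G' t) t) (hinj : InjOn G B)
    (hpos : ∀ t ∈ B, 0 < G t) (hlt : ∀ t ∈ B, r * G t ^ ((d - 1) / d) < |G' t|)
    (hGM : ∀ t ∈ B, |G' t| ≤ M) :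
    volume B ≤ ENNReal.ofReal (d / r * (M / r) ^ (1 / (d - 1))) := by
  have hd0 : 0 < d := by linarith
  have hd1 : 0 < d - 1 := by linarith
  have hφ : ∀ t ∈ B, HasDerivWithinAt (fun t => G t ^ (1 / d))
      (G' t * (1 / d) * G t ^ (1 / d - 1)) B t := fun t ht =>
    ((hder t ht).rpow_const (Or.inl (hpos t ht).ne')).hasDerivWithinAt
  have hφinj : InjOn (fun t => G t ^ (1 / d)) B := by
    intro x hx y hy hxy
    exact hinj hx hy ((Real.rpow_left_inj (hpos x hx).le (hpos y hy).le (by positivity)).1 hxy)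
  have key := lintegral_image_eq_lintegral_abs_deriv_mul hB hφ hφinj 1
  simp only [Pi.one_apply, mul_one, lintegral_one, Measure.restrict_apply_univ] at key
  have hlow : ENNReal.ofReal (r / d) * volume B ≤
      ∫⁻ x in B, ENNReal.ofReal |G' x * (1 / d) * G x ^ (1 / d - 1)| := by
    rw [← setLIntegral_const]
    refine setLIntegral_mono' hB fun x hx => ENNReal.ofReal_le_ofReal ?_
    have hGx := hpos x hx
    rw [abs_mul, abs_mul, abs_of_pos (show 0 < 1 / d by positivity),
      abs_of_pos (Real.rpow_pos_of_pos hGx _)]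
    have h1 : G x ^ ((d - 1) / d) * G x ^ (1 / d - 1) = 1 := by
      rw [← Real.rpow_add hGx]
      have : (d - 1) / d + (1 / d - 1) = 0 := by field_simp; ring
      rw [this, Real.rpow_zero]
    calc r / d = r * (G x ^ ((d - 1) / d) * G x ^ (1 / d - 1)) * (1 / d) := by rw [h1]; ring
      _ = (r * G x ^ ((d - 1) / d)) * (1 / d) * G x ^ (1 / d - 1) := by ring
      _ ≤ |G' x| * (1 / d) * G x ^ (1 / d - 1) := by
        have := (hlt x hx).le
        have := (Real.rpow_pos_of_pos hGx (1 / d - 1)).le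
        gcongr
  have hup : volume ((fun t => G t ^ (1 / d)) '' B) ≤
      ENNReal.ofReal ((M / r) ^ (1 / (d - 1))) := by
    have : (fun t => G t ^ (1 / d)) '' B ⊆ Icc 0 ((M / r) ^ (1 / (d - 1))) := by
      rintro _ ⟨t, ht, rfl⟩
      have hGt := hpos t ht
      refine ⟨Real.rpow_nonneg hGt.le _, ?_⟩
      have h2 : G t ^ ((d - 1) / d) ≤ M / r := by
        rw [le_div_iff₀ hr, mul_comm]
        exact (hlt t ht).le.trans (hGM t ht)
      have h3 := Real.rpow_le_rpow (Real.rpow_nonneg hGt.le _) h2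
        (show 0 ≤ 1 / (d - 1) by positivity)
      rw [← Real.rpow_mul hGt.le] at h3
      have : (d - 1) / d * (1 / (d - 1)) = 1 / d := by field_simp
      rwa [this] at h3
    refine (measure_mono this).trans ?_
    rw [Real.volume_Icc, sub_zero]
  have h4 := (hlow.trans key.ge).trans hup
  have hpos : 0 < r / d := by positivity
  rw [mul_comm, ← ENNReal.le_div_iff_mul_le (Or.inl (by simpa using hpos))
    (Or.inl ENNReal.ofReal_ne_top), ← ENNReal.ofReal_div_of_pos hpos] at h4
  refine h4.trans (le_of_eq ?_)
  congr 1
  field_simp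


/-! ### Superlevel sets in the real case -/

/-- Bounded overlap: for monotone `τ` the intervals `[τ i, τ (i + q)]` cover almost every point of
`[α, β]` at most `q` times. Telescoping gives the bound on the sum for every `τ`. -/
lemma sum_shift_sub_le {α β : ℝ} {τ : ℕ → ℝ} (hα : ∀ i, α ≤ τ i) (hβ : ∀ i, τ i ≤ β)
    (n q : ℕ) : ∑ i ∈ Finset.range n, (τ (i + q) - τ i) ≤ q * (β - α) := by
  induction q with
  | zero => simp
  | succ q ih =>
    have h1 : ∀ i, τ (i + (q + 1)) - τ i =
        (τ ((i + 1) + q) - τ (i + q)) + (τ (i + q) - τ i) := by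
      intro i
      rw [show i + (q + 1) = (i + 1) + q by ring]; ring
    simp_rw [h1]
    rw [Finset.sum_add_distrib, Finset.sum_range_sub (fun i => τ (i + q))]
    push_cast
    linarith [hβ (n + q), hα (0 + q)]

/-- The real estimate. `G j` is the `j`-th derivative of `G 0`, of which `G (k + 1)` is the last
one and is `L`-Lipschitz; the root has order `d = k + 2`, so that the exponents are `(d-1)/d` and
`1/(d-1)`. -/
lemma volume_superlevel_le {α β L M r : ℝ} (hαβ : α < β) (hL : 0 ≤ L) (hM : 0 ≤ M) (hr : 0 < r)
    (k : ℕ) (G : ℕ → ℝ → ℝ)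
    (hG : ∀ j < k + 1, ∀ x ∈ Icc α β, HasDerivWithinAt (G j) (G (j + 1) x) (Icc α β) x)
    (hlip : ∀ x ∈ Icc α β, ∀ y ∈ Icc α β, |G (k + 1) x - G (k + 1) y| ≤ L * |x - y|)
    (hGM : ∀ x ∈ Ioo α β, |G 1 x| ≤ M) :
    volume {t ∈ Ioo α β | 0 < G 0 t ∧
        r * G 0 t ^ (((k + 2 : ℝ) - 1) / (k + 2)) < |G 1 t|} ≤
      ENNReal.ofReal ((k + 2) * ((k + 2) / r * (1 / r) ^ (1 / ((k + 2 : ℝ) - 1))) *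
        (L ^ (1 / ((k + 2 : ℝ) - 1)) * (β - α) + M ^ (1 / ((k + 2 : ℝ) - 1)))) := by
  set D : ℝ := k + 2 with hD
  have hD1 : 0 < D - 1 := by rw [hD]; have : (0 : ℝ) ≤ k := k.cast_nonneg; linarith
  have hder : ∀ t ∈ Ioo α β, HasDerivAt (G 0) (G 1 t) t := fun t ht =>
    (hG 0 (Nat.succ_pos k) t (Ioo_subset_Icc_self ht)).hasDerivAt (Icc_mem_nhds ht.1 ht.2)
  have hc0 : ContinuousOn (G 0) (Ioo α β) := fun t ht => (hder t ht).continuousAt.continuousWithinAt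
  have hc1 : ContinuousOn (G 1) (Ioo α β) := by
    have : ContinuousOn (G 1) (Icc α β) := by
      rcases Nat.eq_zero_or_pos k with rfl | hk
      · have : LipschitzOnWith L.toNNReal (G 1) (Icc α β) :=
          LipschitzOnWith.of_dist_le_mul fun x hx y hy => by
            rw [Real.dist_eq, Real.dist_eq, Real.coe_toNNReal _ hL]
            exact hlip x hx y hy
        exact this.continuousOn
      · exact fun x hx => (hG 1 (by omega) x hx).continuousWithinAt
    exact this.mono Ioo_subset_Icc_self
  set A := {t ∈ Ioo α β | 0 < G 0 t ∧ r * G 0 t ^ ((D - 1) / D) < |G 1 t|} with hA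
  have hAo : IsOpen A := by
    have h1 : IsOpen (Ioo α β ∩ G 0 ⁻¹' Ioi 0) := hc0.isOpen_inter_preimage isOpen_Ioo isOpen_Ioi
    have h2 : ContinuousOn (fun t => |G 1 t| - r * G 0 t ^ ((D - 1) / D)) (Ioo α β) := by
      refine hc1.abs.sub (continuousOn_const.mul (hc0.rpow_const fun x _ => Or.inr ?_))
      have : 0 < D := by linarith
      positivity
    have h3 := h2.isOpen_inter_preimage isOpen_Ioo (isOpen_Ioi (a := (0 : ℝ)))
    convert h1.inter h3 using 1
    ext t
    simp only [hA, mem_ofPred_eq, mem_inter_iff, mem_preimage, mem_Ioi, sub_pos]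
    tauto
  set U := {t ∈ Ioo α β | G 1 t ≠ 0} with hU
  have hUo : IsOpen U := by
    have := hc1.isOpen_inter_preimage isOpen_Ioo (isOpen_compl_singleton (x := (0 : ℝ)))
    exact this
  have hAU : A ⊆ U := fun t ht => ⟨ht.1, fun h0 => by
    have h1 := ht.2.2
    rw [h0, abs_zero] at h1
    have := Real.rpow_pos_of_pos ht.2.1 ((D - 1) / D)
    have : 0 < r * G 0 t ^ ((D - 1) / D) := by positivity
    linarith⟩
  rw [hAo.measure_eq_iSup_isCompact]
  refine iSup₂_le fun K hKA => iSup_le fun hK => ?_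
  -- finitely many components of `U` cover `K`; choose one point in each of them
  set cc : ℝ → Set ℝ := connectedComponentIn U with hcc
  have hself : ∀ t ∈ U, t ∈ cc t := fun t ht => mem_connectedComponentIn ht
  have hccU : ∀ t, cc t ⊆ U := fun t => connectedComponentIn_subset U t
  obtain ⟨T₀, hT₀, hKT₀⟩ := hK.elim_nhds_subcover cc fun x hx =>
    (hUo.connectedComponentIn).mem_nhds (hself x (hAU (hKA hx)))
  classical
  obtain ⟨T, hTT, hTinj, hTim⟩ := Finset.exists_subset_injOn_image_eq_of_surjOn (f := cc)
    (T₀ : Set ℝ) (T₀.image cc) (by rw [Finset.coe_image]; exact surjOn_image _ _)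
  have hTU : ∀ t ∈ T, t ∈ U := fun t ht => hAU (hKA (hT₀ t (hTT ht)))
  have hKT : K ⊆ ⋃ t ∈ T, cc t := by
    intro x hx
    obtain ⟨t, ht, hxt⟩ := mem_iUnion₂.1 (hKT₀ hx)
    have : cc t ∈ T.image cc := by rw [hTim]; exact Finset.mem_image_of_mem _ ht
    obtain ⟨t', ht', he⟩ := Finset.mem_image.1 this
    exact mem_iUnion₂.2 ⟨t', ht', he ▸ hxt⟩
  set n := T.card with hn
  set e := T.orderEmbOfFin hn.symm with he
  have hsep : ∀ t ∈ T, ∀ t' ∈ T, t < t' → ∃ z ∈ Ioo t t', G 1 z = 0 := by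
    intro t ht t' ht' htt
    by_contra! hno
    have hsub : Icc t t' ⊆ U := by
      intro x hx
      refine ⟨⟨(hTU t ht).1.1.trans_le hx.1, hx.2.trans_lt (hTU t' ht').1.2⟩, ?_⟩
      rcases eq_or_lt_of_le hx.1 with rfl | h1
      · exact (hTU _ ht).2
      rcases eq_or_lt_of_le hx.2 with rfl | h2
      · exact (hTU _ ht').2
      exact hno x ⟨h1, h2⟩
    have h1 := isPreconnected_Icc.subset_connectedComponentIn (left_mem_Icc.2 htt.le) hsub
    have h2 : cc t = cc t' := connectedComponentIn_eq (h1 (right_mem_Icc.2 htt.le))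
    exact htt.ne (hTinj ht ht' h2)
  have hnot : ∀ t ∈ T, ∀ t' ∈ T, t ≠ t' → t' ∉ cc t := fun t ht t' ht' hne hmem =>
    hne (hTinj ht ht' (connectedComponentIn_eq hmem))
  have hord : ∀ t, OrdConnected (cc t) := fun t => isPreconnected_connectedComponentIn.ordConnected
  -- the components are intervals, ordered along the line like their representatives
  have hlt : ∀ t ∈ T, ∀ t' ∈ T, t < t' → ∀ x ∈ cc t, x < t' := by
    intro t ht t' ht' htt x hx
    by_contra! hle
    exact hnot t ht t' ht' htt.ne ((hord t).out (hself t (hTU t ht)) hx ⟨htt.le, hle⟩)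
  have hgt : ∀ t ∈ T, ∀ t' ∈ T, t' < t → ∀ x ∈ cc t, t' < x := by
    intro t ht t' ht' htt x hx
    by_contra! hle
    exact hnot t ht t' ht' htt.ne' ((hord t).out hx (hself t (hTU t ht)) ⟨hle, htt.le⟩)
  -- `s` lists the representatives in increasing order, continued by `β`; `τ` is `s` shifted by one
  -- and started at `α`, so that the component of `s i` lies between `τ i` and `s (i + 1)`
  set s : ℕ → ℝ := fun i => if h : i < n then e ⟨i, h⟩ else β with hs
  have hsT : ∀ i < n, s i ∈ T := fun i hi => by
    simp only [hs, hi, dif_pos]; exact Finset.orderEmbOfFin_mem _ _ _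
  have hslt : ∀ i j, i < j → j < n → s i < s j := fun i j hij hj => by
    simp only [hs, hj, hij.trans hj, dif_pos]; exact e.strictMono hij
  set τ : ℕ → ℝ := fun i => if i = 0 then α else s (i - 1) with hτ
  have hsα : ∀ i, α ≤ s i := fun i => by
    by_cases hi : i < n
    · exact (hTU _ (hsT i hi)).1.1.le
    · simp only [hs, hi, dif_neg, not_false_eq_true, hαβ.le]
  have hsβ : ∀ i, s i ≤ β := fun i => by
    by_cases hi : i < n
    · exact (hTU _ (hsT i hi)).1.2.le
    · simp only [hs, hi, dif_neg, not_false_eq_true, le_refl]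
  have hτα : ∀ i, α ≤ τ i := fun i => by
    by_cases hi : i = 0
    · simp [hτ, hi]
    · simp only [hτ, hi, if_false]; exact hsα _
  have hτβ : ∀ i, τ i ≤ β := fun i => by
    by_cases hi : i = 0
    · simp [hτ, hi, hαβ.le]
    · simp only [hτ, hi, if_false]; exact hsβ _
  have hτs : ∀ i, τ (i + 1) = s i := fun i => by simp [hτ]
  have hτle : ∀ i < n, τ i < s i := fun i hi => by
    by_cases h0 : i = 0
    · simp only [hτ, h0, if_true]; exact (hTU _ (hsT 0 (by omega))).1.1
    · simp only [hτ, h0, if_false]; exact hslt _ _ (by omega) hi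
  have hpiece : ∀ t ∈ T, ∀ X, (∀ x ∈ cc t, |G 1 x| ≤ X) →
      volume (A ∩ cc t) ≤ ENNReal.ofReal (D / r * (X / r) ^ (1 / (D - 1))) := by
    intro t ht X hX
    refine volume_le_of_injOn (by linarith) hr
      (hAo.measurableSet.inter (hUo.connectedComponentIn).measurableSet)
      (fun x hx => hder x hx.1.1) ?_ (fun x hx => hx.1.2.1) (fun x hx => hx.1.2.2)
      (fun x hx => hX x hx.2)
    have hne : ∀ x ∈ A ∩ cc t, ∀ y ∈ A ∩ cc t, x < y → G 0 x ≠ G 0 y := by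
      intro x hx y hy hxy h0
      have hsub : Icc x y ⊆ U := ((hord t).out hx.2 hy.2).trans (hccU t)
      obtain ⟨w, hw, hw0⟩ := exists_hasDerivAt_eq_zero hxy
        (hc0.mono fun z hz => (hsub hz).1) h0
        (fun z hz => hder z (hsub (Ioo_subset_Icc_self hz)).1)
      exact (hsub (Ioo_subset_Icc_self hw)).2 hw0
    intro x hx y hy hxy
    rcases lt_trichotomy x y with h | h | h
    · exact absurd hxy (hne x hx y hy h)
    · exact h
    · exact absurd hxy.symm (hne y hy x hx h)
  set ε : ℝ := 1 / (D - 1) with hε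
  have hε0 : 0 < ε := by positivity
  set c : ℝ := D / r * (1 / r) ^ ε with hc
  have hD0 : 0 < D := by linarith
  have hc0' : 0 ≤ c := by positivity
  have hscale : ∀ X, 0 ≤ X → D / r * (X / r) ^ ε = c * X ^ ε := by
    intro X hX
    rw [hc, div_eq_mul_one_div X r, Real.mul_rpow hX (by positivity)]
    ring
  have hτmono : ∀ i < n, ∀ q, i + q < n → τ i < s (i + q) := by
    intro i hi q hq
    rcases Nat.eq_zero_or_pos q with rfl | hq0
    · exact hτle i hi
    · exact (hτle i hi).trans (hslt _ _ (by omega) hq)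
  -- `max 0` makes the `L` term nonnegative before `hterm` shows that it is redundant
  have hmain : ∀ i < n, volume (A ∩ cc (s i)) ≤
      ENNReal.ofReal (c * (L ^ ε * (max 0 (τ (i + (k + 2)) - τ i)) +
        if n ≤ i + (k + 1) then M ^ ε else 0)) := by
    intro i hi
    split_ifs with hik
    -- fewer than `k + 1` representatives follow `s i`: only the global bound `M` is available
    · refine (hpiece _ (hsT i hi) M fun x hx => hGM x (hccU _ hx).1).trans
        (ENNReal.ofReal_le_ofReal ?_)
      rw [hscale M hM]
      refine mul_le_mul_of_nonneg_left ?_ hc0'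
      have : 0 ≤ L ^ ε * (max 0 (τ (i + (k + 2)) - τ i)) :=
        mul_nonneg (Real.rpow_nonneg hL _) (le_max_left _ _)
      linarith
    -- otherwise `s i, …, s (i + k + 1)` are separated by `k + 1` zeros of `G 1`
    · push Not at hik
      set a := τ i with ha
      have hb' : τ (i + (k + 2)) = s (i + (k + 1)) := hτs (i + (k + 1))
      rw [hb']
      set b := s (i + (k + 1)) with hb
      have hab : a < b := hτmono i hi (k + 1) hik
      have hz : ∀ j, ∃ z, j ≤ k → z ∈ Ioo (s (i + j)) (s (i + j + 1)) ∧ G 1 z = 0 := by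
        intro j
        by_cases hj : j ≤ k
        · obtain ⟨z, hz, hz0⟩ := hsep _ (hsT (i + j) (by omega)) _ (hsT (i + j + 1) (by omega))
            (hslt _ _ (by omega) (by omega))
          exact ⟨z, fun _ => ⟨hz, hz0⟩⟩
        · exact ⟨0, fun h => absurd h hj⟩
      choose z hz using hz
      have hsab : ∀ j ≤ k + 1, s (i + j) ∈ Icc a b := by
        intro j hj
        refine ⟨(hτmono i hi j (by omega)).le, ?_⟩
        rcases eq_or_lt_of_le hj with rfl | h
        · exact le_rfl
        · exact (hslt _ _ (by omega) hik).le
      have hbound := abs_le_of_zeros (α := α) (β := β) hL k (fun j => G (j + 1))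
        (fun j hj => hG (j + 1) (by omega)) hlip a b (Icc_subset_Icc (hτα i) (hsβ _)) z
        (fun j hj => ((hz j hj.le).1.2).trans ((hz (j + 1) hj).1.1))
        (fun j hj => ⟨⟨(hsab j (by omega)).1.trans (hz j hj).1.1.le,
          (hz j hj).1.2.le.trans (hsab (j + 1) (by omega)).2⟩, (hz j hj).2⟩)
      have hccab : ∀ x ∈ cc (s i), x ∈ Icc a b := by
        intro x hx
        constructor
        · rcases Nat.eq_zero_or_pos i with h0 | h0
          · have : a = α := by simp [ha, hτ, h0]
            rw [this]; exact (hccU _ hx).1.1.le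
          · have : a = s (i - 1) := by simp [ha, hτ, h0.ne']
            rw [this]
            exact (hgt _ (hsT i hi) _ (hsT _ (by omega)) (hslt _ _ (by omega) hi) x hx).le
        · exact (hlt _ (hsT i hi) _ (hsT _ hik) (hslt _ _ (by omega) hik) x hx).le
      refine (hpiece _ (hsT i hi) _ fun x hx => hbound x (hccab x hx)).trans
        (ENNReal.ofReal_le_ofReal ?_)
      have hba : 0 ≤ b - a := by linarith
      rw [hscale _ (by positivity), Real.mul_rpow hL (by positivity), ← Real.rpow_natCast,
        ← Real.rpow_mul hba, max_eq_right hba]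
      have : ((k + 1 : ℕ) : ℝ) * ε = 1 := by
        rw [hε, show ((k + 1 : ℕ) : ℝ) = D - 1 by rw [hD]; push_cast; ring]
        field_simp
      rw [this, Real.rpow_one, add_zero]
  have hKs : K ⊆ ⋃ i ∈ Finset.range n, A ∩ cc (s i) := by
    intro x hx
    obtain ⟨t, ht, hxt⟩ := mem_iUnion₂.1 (hKT hx)
    have : t ∈ Set.range e := by rw [he, Finset.range_orderEmbOfFin]; exact ht
    obtain ⟨i, rfl⟩ := this
    refine mem_iUnion₂.2 ⟨i, Finset.mem_range.2 i.2, hKA hx, ?_⟩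
    simpa [hs] using hxt
  have hterm : ∀ i < n, 0 ≤ τ (i + (k + 2)) - τ i := by
    intro i hi
    rw [show τ (i + (k + 2)) = s (i + (k + 1)) from hτs (i + (k + 1)), sub_nonneg]
    by_cases h : i + (k + 1) < n
    · exact (hτmono i hi _ h).le
    · have : s (i + (k + 1)) = β := by simp only [hs, h, dif_neg, not_false_eq_true]
      rw [this]; exact hτβ i
  have hL' : 0 ≤ L ^ ε := Real.rpow_nonneg hL _
  have hM' : 0 ≤ M ^ ε := Real.rpow_nonneg hM _
  calc volume K ≤ volume (⋃ i ∈ Finset.range n, A ∩ cc (s i)) := measure_mono hKs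
    _ ≤ ∑ i ∈ Finset.range n, volume (A ∩ cc (s i)) := measure_biUnion_finset_le _ _
    _ ≤ ∑ i ∈ Finset.range n, ENNReal.ofReal (c * (L ^ ε * (τ (i + (k + 2)) - τ i) +
        if n ≤ i + (k + 1) then M ^ ε else 0)) := by
      refine Finset.sum_le_sum fun i hi => ?_
      have hi := Finset.mem_range.1 hi
      have := hmain i hi
      rwa [max_eq_right (hterm i hi)] at this
    _ = ENNReal.ofReal (∑ i ∈ Finset.range n, c * (L ^ ε * (τ (i + (k + 2)) - τ i) +
        if n ≤ i + (k + 1) then M ^ ε else 0)) := by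
      refine (ENNReal.ofReal_sum_of_nonneg fun i hi => mul_nonneg hc0' (add_nonneg
        (mul_nonneg hL' (hterm i (Finset.mem_range.1 hi))) ?_)).symm
      split_ifs <;> [exact hM'; exact le_rfl]
    _ ≤ _ := by
      refine ENNReal.ofReal_le_ofReal ?_
      rw [← Finset.mul_sum, Finset.sum_add_distrib, ← Finset.mul_sum, ← Finset.sum_filter,
        Finset.sum_const, nsmul_eq_mul]
      have h1 := sum_shift_sub_le hτα hτβ n (k + 2)
      have h2 : (((Finset.range n).filter fun i => n ≤ i + (k + 1)).card : ℝ) ≤ D := by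
        have : ((Finset.range n).filter fun i => n ≤ i + (k + 1)) ⊆
            Finset.Ico (n - (k + 1)) n := by
          intro i hi
          rw [Finset.mem_filter, Finset.mem_range] at hi
          rw [Finset.mem_Ico]; omega
        have h3 := Finset.card_le_card this
        rw [Nat.card_Ico] at h3
        have h4 : ((Finset.range n).filter fun i => n ≤ i + (k + 1)).card ≤ k + 2 := by omega
        rw [hD]; exact_mod_cast h4
      have h1' : ∑ i ∈ Finset.range n, (τ (i + (k + 2)) - τ i) ≤ D * (β - α) := by
        rw [hD]; push_cast at h1; exact h1
      calc _ ≤ c * (L ^ ε * (D * (β - α)) + D * M ^ ε) := by gcongr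
        _ = _ := by ring

/-! ### Best Lipschitz constants and derivatives of radicals -/

lemma lipConstOn_nonneg {E : Type*} [NormedAddCommGroup E] (f : ℝ → E) (s : Set ℝ) :
    0 ≤ lipConstOn f s :=
  Real.sInf_nonneg fun _ hx => hx.1

/-- The infimum defining `lipConstOn` is attained as soon as its index set is nonempty. -/
lemma norm_sub_le_lipConstOn {E : Type*} [NormedAddCommGroup E] {f : ℝ → E} {s : Set ℝ}
    (h : ∃ C : ℝ, 0 ≤ C ∧ ∀ x ∈ s, ∀ y ∈ s, ‖f x - f y‖ ≤ C * |x - y|) :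
    ∀ x ∈ s, ∀ y ∈ s, ‖f x - f y‖ ≤ lipConstOn f s * |x - y| := by
  intro x hx y hy
  rcases eq_or_ne x y with rfl | hxy
  · simp
  have hpos : 0 < |x - y| := abs_pos.2 (sub_ne_zero.2 hxy)
  rw [← div_le_iff₀ hpos]
  exact le_csInf h fun C hC => (div_le_iff₀ hpos).2 (hC.2 x hx y hy)

lemma hasDerivWithinAt_iteratedDerivWithin {α β : ℝ} (hαβ : α < β) {n j : ℕ} {g : ℝ → ℂ}
    (hg : ContDiffOn ℝ n g (Icc α β)) (hj : j < n) {x : ℝ} (hx : x ∈ Icc α β) :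
    HasDerivWithinAt (iteratedDerivWithin j g (Icc α β))
      (iteratedDerivWithin (j + 1) g (Icc α β) x) (Icc α β) x := by
  have := (hg.differentiableOn_iteratedDerivWithin (m := j) (by exact_mod_cast hj)
    (uniqueDiffOn_Icc hαβ)) x hx
  rw [iteratedDerivWithin_succ]
  exact this.hasDerivWithinAt

/-- A continuous root of order `n + 1` of a differentiable function is differentiable off its
zeros: divide the slope of `g` by `∑ (f s)^i (f t)^(n-i)`, which tends to `(n + 1) (f t)^n`. -/
lemma hasDerivAt_of_pow_eq {f g : ℝ → ℂ} {g' : ℂ} {n : ℕ} {t : ℝ} (hf : ContinuousAt f t)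
    (hfg : ∀ᶠ s in 𝓝 t, f s ^ (n + 1) = g s) (hg : HasDerivAt g g' t) (h0 : f t ≠ 0) :
    HasDerivAt f (g' / ((n + 1) * f t ^ n)) t := by
  rw [hasDerivAt_iff_tendsto_slope] at hg ⊢
  set q : ℝ → ℂ := fun s => ∑ i ∈ Finset.range (n + 1), f s ^ i * f t ^ (n + 1 - 1 - i) with hq
  have hqt : q t = (n + 1) * f t ^ n := by
    simp only [hq]
    rw [Finset.sum_congr rfl (g := fun _ => f t ^ n)]
    · simp
    · intro i hi
      rw [← pow_add]
      congr 1
      have := Finset.mem_range.1 hi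
      omega
  have hqc : ContinuousAt q t := by
    simp only [hq]
    fun_prop
  have hn : ((n : ℂ) + 1) ≠ 0 := by exact_mod_cast n.succ_ne_zero
  have hq0 : q t ≠ 0 := by rw [hqt]; exact mul_ne_zero hn (pow_ne_zero _ h0)
  rw [← hqt]
  have hlim := hg.div (hqc.tendsto.mono_left nhdsWithin_le_nhds) hq0
  refine hlim.congr' ?_
  filter_upwards [nhdsWithin_le_nhds hfg, nhdsWithin_le_nhds (hqc.eventually_ne hq0)] with s hs hqs
  rw [Pi.div_apply]
  simp only [slope, vsub_eq_sub]
  rw [← hs, ← hfg.self_of_nhds, ← (Commute.all (f s) (f t)).geom_sum₂_mul]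
  change ((s - t)⁻¹ • (q s * (f s - f t))) / q s = _
  rw [← mul_smul_comm, mul_div_cancel_left₀ _ hqs]

/-! ### Absolute continuity from integrability of the derivative -/

/-- The increment bound `‖f b - f a‖ ≤ ∫ ‖f'‖` when `f` is differentiable on all of `(a, b)`. -/
lemma enorm_sub_le_lintegral_of_differentiable {f : ℝ → ℂ} {a b : ℝ} (hab : a ≤ b)
    (hf : ContinuousOn f (Icc a b)) (hd : ∀ t ∈ Ioo a b, DifferentiableAt ℝ f t)
    (hi : IntegrableOn (deriv f) (Ioo a b)) :
    ‖f b - f a‖ₑ ≤ ∫⁻ t in Ioo a b, ‖deriv f t‖ₑ := by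
  rw [← intervalIntegral.integral_eq_sub_of_hasDerivAt_of_le hab hf
    (fun t ht => (hd t ht).hasDerivAt)
    ((intervalIntegrable_iff_integrableOn_Ioo_of_le hab).2 hi),
    intervalIntegral.integral_of_le hab, integral_Ioc_eq_integral_Ioo]
  exact enorm_integral_le_lintegral_enorm _

/-- The increment bound for `f` differentiable only off its zeros. If `f` vanishes at some point
of `[a, b]`, split at the first zero `z₀` and the last zero `z₁`: `f b - f a` is the sum of the
increments over `[a, z₀]` and `[z₁, b]`, in whose interiors `f` has no zero. -/
lemma enorm_sub_le_lintegral {f : ℝ → ℂ} {a b : ℝ} (hab : a ≤ b)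
    (hf : ContinuousOn f (Icc a b)) (hd : ∀ t ∈ Ioo a b, f t ≠ 0 → DifferentiableAt ℝ f t)
    (hi : IntegrableOn (deriv f) (Ioo a b)) :
    ‖f b - f a‖ₑ ≤ ∫⁻ t in Ioo a b, ‖deriv f t‖ₑ := by
  rcases (Icc a b ∩ f ⁻¹' {0}).eq_empty_or_nonempty with hZ | hZ
  · refine enorm_sub_le_lintegral_of_differentiable hab hf (fun t ht => hd t ht fun h0 => ?_) hi
    exact (eq_empty_iff_forall_notMem.1 hZ t) ⟨Ioo_subset_Icc_self ht, h0⟩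
  have hc : IsCompact (Icc a b ∩ f ⁻¹' {0}) :=
    isCompact_Icc.of_isClosed_subset
      (hf.preimage_isClosed_of_isClosed isClosed_Icc isClosed_singleton) inter_subset_left
  obtain ⟨z₀, hz₀, hle⟩ := hc.exists_isLeast hZ
  obtain ⟨z₁, hz₁, hge⟩ := hc.exists_isGreatest hZ
  have h01 : z₀ ≤ z₁ := hle hz₁
  have e₀ : ‖f z₀ - f a‖ₑ ≤ ∫⁻ t in Ioo a z₀, ‖deriv f t‖ₑ := by
    refine enorm_sub_le_lintegral_of_differentiable hz₀.1.1
      (hf.mono (Icc_subset_Icc_right hz₀.1.2)) (fun t ht => ?_)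
      (hi.mono_set (Ioo_subset_Ioo_right hz₀.1.2))
    refine hd t ⟨ht.1, ht.2.trans_le hz₀.1.2⟩ fun h0 => ?_
    exact absurd (hle ⟨⟨ht.1.le, (ht.2.trans_le hz₀.1.2).le⟩, h0⟩) (not_le.2 ht.2)
  have e₁ : ‖f b - f z₁‖ₑ ≤ ∫⁻ t in Ioo z₁ b, ‖deriv f t‖ₑ := by
    refine enorm_sub_le_lintegral_of_differentiable hz₁.1.2
      (hf.mono (Icc_subset_Icc_left hz₁.1.1)) (fun t ht => ?_)
      (hi.mono_set (Ioo_subset_Ioo_left hz₁.1.1))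
    refine hd t ⟨hz₁.1.1.trans_lt ht.1, ht.2⟩ fun h0 => ?_
    exact absurd (hge ⟨⟨(hz₁.1.1.trans_lt ht.1).le, ht.2.le⟩, h0⟩) (not_le.2 ht.1)
  have hsplit : f b - f a = (f z₀ - f a) + (f b - f z₁) := by
    rw [show f z₀ = 0 from hz₀.2, show f z₁ = 0 from hz₁.2]; ring
  have hdisj : Disjoint (Ioo a z₀) (Ioo z₁ b) := by
    rw [Set.disjoint_left]
    intro x hx hx'
    exact absurd (hx.2.trans_le h01) (not_lt.2 hx'.1.le)
  calc ‖f b - f a‖ₑ ≤ ‖f z₀ - f a‖ₑ + ‖f b - f z₁‖ₑ := by rw [hsplit]; exact enorm_add_le _ _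
    _ ≤ (∫⁻ t in Ioo a z₀, ‖deriv f t‖ₑ) + ∫⁻ t in Ioo z₁ b, ‖deriv f t‖ₑ := add_le_add e₀ e₁
    _ = ∫⁻ t in Ioo a z₀ ∪ Ioo z₁ b, ‖deriv f t‖ₑ := (lintegral_union measurableSet_Ioo hdisj).symm
    _ ≤ _ := lintegral_mono_set (union_subset (Ioo_subset_Ioo_right hz₀.1.2)
        (Ioo_subset_Ioo_left hz₁.1.1))

lemma absolutelyContinuousOn_of_integrable {f : ℝ → ℂ} {α β : ℝ}
    (hf : ContinuousOn f (Ioo α β)) (hd : ∀ t ∈ Ioo α β, f t ≠ 0 → DifferentiableAt ℝ f t)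
    (hi : IntegrableOn (deriv f) (Ioo α β)) : AbsolutelyContinuousOn f (Ioo α β) := by
  intro ε hε
  have hfin : ∫⁻ t in Ioo α β, ‖deriv f t‖ₑ ≠ ∞ := hi.2.ne
  obtain ⟨δ, hδ, hδε⟩ := exists_pos_setLIntegral_lt_of_measure_lt hfin
    (ENNReal.ofReal_pos.2 hε).ne'
  have hδ1 : min δ 1 ≠ ∞ := ne_top_of_le_ne_top ENNReal.one_ne_top (min_le_right _ _)
  refine ⟨(min δ 1).toReal, ENNReal.toReal_pos (lt_min hδ one_pos).ne' hδ1, ?_⟩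
  intro m a b hab hsub hdisj hsum
  have hsub' : ∀ i, Ioo (a i) (b i) ⊆ Ioo α β := fun i => Ioo_subset_Icc_self.trans (hsub i)
  set V := ⋃ i, Ioo (a i) (b i) with hV
  have hVm : MeasurableSet V := MeasurableSet.iUnion fun i => measurableSet_Ioo
  have hVsub : V ⊆ Ioo α β := iUnion_subset hsub'
  have hVδ : volume.restrict (Ioo α β) V < δ := by
    rw [Measure.restrict_apply hVm, inter_eq_left.2 hVsub]
    calc volume V ≤ ∑ i, volume (Ioo (a i) (b i)) := measure_iUnion_fintype_le _ _
      _ = ENNReal.ofReal (∑ i, (b i - a i)) := by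
        simp only [Real.volume_Ioo]
        exact (ENNReal.ofReal_sum_of_nonneg fun i _ => sub_nonneg.2 (hab i)).symm
      _ < min δ 1 := (ENNReal.ofReal_lt_iff_lt_toReal
          (Finset.sum_nonneg fun i _ => sub_nonneg.2 (hab i)) hδ1).2 hsum
      _ ≤ δ := min_le_left _ _
  have hlt := hδε V hVδ
  rw [Measure.restrict_restrict hVm, inter_eq_left.2 hVsub] at hlt
  have hle : ENNReal.ofReal (∑ i, ‖f (b i) - f (a i)‖) ≤ ∫⁻ t in V, ‖deriv f t‖ₑ := by
    rw [ENNReal.ofReal_sum_of_nonneg fun i _ => norm_nonneg _, hV,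
      lintegral_iUnion (fun i => measurableSet_Ioo)
        (fun i j hij => Set.disjoint_iff_inter_eq_empty.2 (hdisj hij)), tsum_fintype]
    refine Finset.sum_le_sum fun i _ => ?_
    rw [ofReal_norm]
    exact enorm_sub_le_lintegral (hab i) (hf.mono (hsub i)) (fun t ht => hd t (hsub' i ht))
      (hi.mono_set (hsub' i))
  exact (ENNReal.ofReal_lt_ofReal_iff hε).1 (hle.trans_lt hlt)

/-! ### Distribution function of the derivative of a radical -/

/-- The distribution function of `f'`, where `f` is a root of order `k + 2` of `G 0` and `G j` is
the `j`-th derivative of `G 0`. The factor `4` counts the functions `±Re (G 0)`, `±Im (G 0)`. -/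
lemma volume_deriv_gt_le {α β L M r : ℝ} (hαβ : α < β) (hL : 0 ≤ L) (hM : 0 ≤ M) (hr : 0 < r)
    (k : ℕ) {f : ℝ → ℂ} (G : ℕ → ℝ → ℂ)
    (hG : ∀ j < k + 1, ∀ x ∈ Icc α β, HasDerivWithinAt (G j) (G (j + 1) x) (Icc α β) x)
    (hlip : ∀ x ∈ Icc α β, ∀ y ∈ Icc α β, ‖G (k + 1) x - G (k + 1) y‖ ≤ L * |x - y|)
    (hGM : ∀ x ∈ Ioo α β, ‖G 1 x‖ ≤ M) (hfg : ∀ t ∈ Ioo α β, f t ^ (k + 2) = G 0 t)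
    (hf : ∀ t ∈ Ioo α β, f t ≠ 0 → deriv f t = G 1 t / ((k + 2) * f t ^ (k + 1))) :
    volume {t ∈ Ioo α β | r < ‖deriv f t‖} ≤
      ENNReal.ofReal (4 * ((k + 2) * ((k + 2) / r * (1 / r) ^ (1 / ((k + 2 : ℝ) - 1))) *
        (L ^ (1 / ((k + 2 : ℝ) - 1)) * (β - α) + M ^ (1 / ((k + 2 : ℝ) - 1))))) := by
  set Q := (k + 2) * ((k + 2) / r * (1 / r) ^ (1 / ((k + 2 : ℝ) - 1))) *
        (L ^ (1 / ((k + 2 : ℝ) - 1)) * (β - α) + M ^ (1 / ((k + 2 : ℝ) - 1))) with hQ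
  set p : ℝ := ((k + 2 : ℝ) - 1) / (k + 2) with hp
  have hA : ∀ ℓ : ℂ →L[ℝ] ℝ, (∀ z, |ℓ z| ≤ ‖z‖) →
      volume {t ∈ Ioo α β | 0 < ℓ (G 0 t) ∧ r * ℓ (G 0 t) ^ p < |ℓ (G 1 t)|} ≤
        ENNReal.ofReal Q := by
    intro ℓ hℓ
    refine volume_superlevel_le hαβ hL hM hr k (fun j t => ℓ (G j t)) ?_ ?_ ?_
    · intro j hj x hx
      exact ℓ.hasFDerivAt.comp_hasDerivWithinAt x (hG j hj x hx)
    · intro x hx y hy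
      rw [← map_sub]
      exact (hℓ _).trans (hlip x hx y hy)
    · exact fun x hx => (hℓ _).trans (hGM x hx)
  set A : (ℂ →L[ℝ] ℝ) → Set ℝ := fun ℓ =>
    {t ∈ Ioo α β | 0 < ℓ (G 0 t) ∧ r * ℓ (G 0 t) ^ p < |ℓ (G 1 t)|} with hAdef
  set N : Set ℝ := {t | f t = 0 ∧ ∃ h', h' ≠ 0 ∧ HasDerivAt f h' t} ∪
    ({t | (G 0 t).re = 0 ∧ ∃ h', h' ≠ 0 ∧ HasDerivAt (fun t => (G 0 t).re) h' t} ∪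
     {t | (G 0 t).im = 0 ∧ ∃ h', h' ≠ 0 ∧ HasDerivAt (fun t => (G 0 t).im) h' t}) with hN
  have hN0 : volume N = 0 :=
    ((countable_zeros_of_deriv_ne_zero f).union
      ((countable_zeros_of_deriv_ne_zero fun t => (G 0 t).re).union
        (countable_zeros_of_deriv_ne_zero fun t => (G 0 t).im))).measure_zero _
  -- one of the four real functions `±Re g`, `±Im g` realises the large derivative
  have key : ∀ t ∈ Ioo α β, ∀ ℓ : ℂ →L[ℝ] ℝ, (∀ z, |ℓ z| ≤ ‖z‖) → ℓ (G 0 t) ≠ 0 →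
      r * ‖G 0 t‖ ^ p < |ℓ (G 1 t)| → t ∈ A ℓ ∪ A (-ℓ) := by
    intro t ht ℓ hℓ hne hlt
    have hp0 : 0 ≤ p := by
      rw [hp]
      have : (0 : ℝ) ≤ k := k.cast_nonneg
      have : (0 : ℝ) ≤ (k : ℝ) + 2 - 1 := by linarith
      positivity
    have hle : ∀ s : ℝ, 0 < s → s ≤ ‖G 0 t‖ → r * s ^ p ≤ r * ‖G 0 t‖ ^ p := by
      intro s hs hs'
      gcongr
    rcases lt_or_gt_of_ne hne with h | h
    · right
      refine ⟨ht, by simpa using h, ?_⟩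
      have : (-ℓ) (G 0 t) ≤ ‖G 0 t‖ := by
        rw [neg_apply]
        exact (neg_le_abs _).trans (hℓ _)
      refine (hle _ (by simpa using h) this).trans_lt ?_
      rw [neg_apply, abs_neg]
      exact hlt
    · left
      exact ⟨ht, h, (hle _ h ((le_abs_self _).trans (hℓ _))).trans_lt hlt⟩
  have hcover : {t ∈ Ioo α β | r < ‖deriv f t‖} ⊆
      N ∪ ((A Complex.reCLM ∪ A (-Complex.reCLM)) ∪ (A Complex.imCLM ∪ A (-Complex.imCLM))) := by
    rintro t ⟨ht, hrt⟩
    by_cases htN : t ∈ N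
    · exact Or.inl htN
    right
    simp only [hN, mem_union, not_or, mem_ofPred_eq, not_and, not_exists] at htN
    obtain ⟨hN1, hN2, hN3⟩ := htN
    have hG0 : HasDerivAt (G 0) (G 1 t) t :=
      (hG 0 (Nat.succ_pos k) t (Ioo_subset_Icc_self ht)).hasDerivAt (Icc_mem_nhds ht.1 ht.2)
    have hne : deriv f t ≠ 0 := fun h => by rw [h, norm_zero] at hrt; linarith
    -- `deriv f t ≠ 0` rules out the junk value, so `f` is differentiable at `t`
    have hft : f t ≠ 0 := fun h0 =>
      hN1 h0 _ hne (differentiableAt_of_deriv_ne_zero hne).hasDerivAt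
    have hnorm : 0 < ‖f t‖ := norm_pos_iff.2 hft
    have hk2 : ‖((k : ℂ) + 2)‖ = k + 2 := by
      rw [show ((k : ℂ) + 2) = ((k + 2 : ℕ) : ℂ) by push_cast; ring, Complex.norm_natCast]
      push_cast; ring
    rw [hf t ht hft, norm_div, norm_mul, norm_pow, hk2, lt_div_iff₀ (by positivity)] at hrt
    have hgp : ‖G 0 t‖ ^ p = ‖f t‖ ^ (k + 1) := by
      rw [← hfg t ht, norm_pow, ← Real.rpow_natCast, ← Real.rpow_natCast,
        ← Real.rpow_mul hnorm.le]
      congr 1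
      rw [hp]; push_cast; field_simp; ring
    have hsum : ‖G 1 t‖ ≤ |(G 1 t).re| + |(G 1 t).im| := Complex.norm_le_abs_re_add_abs_im _
    -- the factor `d = k + 2 ≥ 2` in `g' = d f^(d-1) f'` pays for passing to one of the two parts
    have h2 : 2 * (r * ‖G 0 t‖ ^ p) < |(G 1 t).re| + |(G 1 t).im| := by
      rw [hgp]
      have hk : (0 : ℝ) ≤ k := k.cast_nonneg
      have : 0 ≤ (k : ℝ) * (r * ‖f t‖ ^ (k + 1)) := by positivity
      linarith
    have hpos : 0 ≤ r * ‖G 0 t‖ ^ p := by positivity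
    rcases lt_or_ge (r * ‖G 0 t‖ ^ p) |(G 1 t).re| with h | h
    · left
      refine key t ht Complex.reCLM Complex.abs_re_le_norm (fun h0 => ?_) h
      refine hN2 h0 (G 1 t).re (fun h1 => ?_)
        (Complex.reCLM.hasFDerivAt.comp_hasDerivAt t hG0)
      rw [h1, abs_zero] at h; linarith
    · have h' : r * ‖G 0 t‖ ^ p < |(G 1 t).im| := by linarith
      right
      refine key t ht Complex.imCLM Complex.abs_im_le_norm (fun h0 => ?_) h'
      refine hN3 h0 (G 1 t).im (fun h1 => ?_)
        (Complex.imCLM.hasFDerivAt.comp_hasDerivAt t hG0)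
      rw [h1, abs_zero] at h'; linarith
  have hre : ∀ z, |Complex.reCLM z| ≤ ‖z‖ := Complex.abs_re_le_norm
  have him : ∀ z, |Complex.imCLM z| ≤ ‖z‖ := Complex.abs_im_le_norm
  have hre' : ∀ z, |(-Complex.reCLM) z| ≤ ‖z‖ := fun z => by
    rw [neg_apply, abs_neg]; exact hre z
  have him' : ∀ z, |(-Complex.imCLM) z| ≤ ‖z‖ := fun z => by
    rw [neg_apply, abs_neg]; exact him z
  calc _ ≤ volume _ := measure_mono hcover
    _ ≤ volume N + ((volume (A Complex.reCLM) + volume (A (-Complex.reCLM))) +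
        (volume (A Complex.imCLM) + volume (A (-Complex.imCLM)))) :=
      (measure_union_le _ _).trans (add_le_add le_rfl ((measure_union_le _ _).trans
        (add_le_add (measure_union_le _ _) (measure_union_le _ _))))
    _ ≤ 0 + ((ENNReal.ofReal Q + ENNReal.ofReal Q) + (ENNReal.ofReal Q + ENNReal.ofReal Q)) :=
      add_le_add hN0.le (add_le_add (add_le_add (hA _ hre) (hA _ hre'))
        (add_le_add (hA _ him) (hA _ him')))
    _ = ENNReal.ofReal (4 * Q) := by
      rw [ENNReal.ofReal_mul (p := 4) (by norm_num), zero_add,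
        show ENNReal.ofReal 4 = 4 by norm_num]
      ring

/-- On a set of finite measure, a weak `L^p` bound with `p > 1` implies integrability: in the
layer-cake formula the levels `r ≤ 1` are controlled by the measure of the set, the others by
`∫ r^(-p)`. -/
lemma integrableOn_of_volume_gt_le {E : Type*} [NormedAddCommGroup E] {F : ℝ → E} {s : Set ℝ}
    (hs : MeasurableSet s) (hsv : volume s ≠ ∞)
    (hF : StronglyMeasurable F) {c p : ℝ} (hp : 1 < p)
    (h : ∀ r > 0, volume {t ∈ s | r < ‖F t‖} ≤ ENNReal.ofReal (c * r ^ (-p))) :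
    IntegrableOn F s := by
  refine ⟨hF.aestronglyMeasurable, ?_⟩
  have hcake := lintegral_eq_lintegral_meas_lt (volume.restrict s) (f := fun t => ‖F t‖)
    (Eventually.of_forall fun t => norm_nonneg _) hF.norm.measurable.aemeasurable
  simp only [ofReal_norm] at hcake
  rw [HasFiniteIntegral, hcake, ← Ioc_union_Ioi_eq_Ioi (zero_le_one (α := ℝ))]
  refine (lintegral_union_le _ _ _).trans_lt (ENNReal.add_lt_top.2 ⟨?_, ?_⟩)
  · calc ∫⁻ r in Ioc (0 : ℝ) 1, volume.restrict s {a | r < ‖F a‖}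
        ≤ ∫⁻ _ in Ioc (0 : ℝ) 1, volume s := by
          refine lintegral_mono fun r => ?_
          rw [← Measure.restrict_apply_univ s]
          exact measure_mono (subset_univ _)
      _ < ∞ := by
          rw [setLIntegral_const, Real.volume_Ioc]
          exact ENNReal.mul_lt_top hsv.lt_top ENNReal.ofReal_lt_top
  · have hint : IntegrableOn (fun r : ℝ => c * r ^ (-p)) (Ioi 1) :=
      (integrableOn_Ioi_rpow_of_lt (by linarith) one_pos).const_mul c
    refine lt_of_le_of_lt (setLIntegral_mono_ae' measurableSet_Ioi
      (g := fun r => ENNReal.ofReal (c * r ^ (-p))) (Eventually.of_forall fun r hr => ?_)) ?_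
    · have hr0 : (0 : ℝ) < r := lt_trans one_pos hr
      rw [Measure.restrict_apply' hs, inter_comm]
      exact h r hr0
    · have := hint.2
      refine lt_of_le_of_lt (lintegral_mono fun r => ?_) this
      exact Real.ofReal_le_enorm _

/-! ### Roots of order at least two, and the Lipschitz case -/

/-- The theorem for `d = k + 2`, with the constant `8 d²`. -/
lemma weakLp_aux (k : ℕ) {α β : ℝ} (hαβ : α < β) {f g : ℝ → ℂ}
    (hf : ContinuousOn f (Ioo α β)) (hg : CkLipOn (k + 1) g (Icc α β))
    (hfg : ∀ t ∈ Ioo α β, f t ^ (k + 2) = g t) :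
    AbsolutelyContinuousOn f (Ioo α β) ∧
      weakLpNorm ((k + 2 : ℝ) / ((k + 2 : ℝ) - 1)) (deriv f) (Ioo α β) ≤
        ENNReal.ofReal ((8 * (k + 2 : ℝ) ^ 2) * max
          ((lipConstOn (iteratedDerivWithin (k + 1) g (Icc α β)) (Icc α β)) ^ ((k + 2 : ℝ)⁻¹) *
            (β - α) ^ (((k + 2 : ℝ) - 1) / (k + 2)))
          ((eLpNorm (deriv g) ⊤ (volume.restrict (Ioo α β))).toReal ^ ((k + 2 : ℝ)⁻¹))) := by
  set G : ℕ → ℝ → ℂ := fun j => iteratedDerivWithin j g (Icc α β) with hG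
  set L := lipConstOn (G (k + 1)) (Icc α β) with hL
  set M := (eLpNorm (deriv g) ⊤ (volume.restrict (Ioo α β))).toReal with hM
  have hL0 : 0 ≤ L := lipConstOn_nonneg _ _
  have hM0 : 0 ≤ M := ENNReal.toReal_nonneg
  have hGd : ∀ j < k + 1, ∀ x ∈ Icc α β, HasDerivWithinAt (G j) (G (j + 1) x) (Icc α β) x :=
    fun j hj x hx => hasDerivWithinAt_iteratedDerivWithin hαβ hg.1 hj hx
  have hlip := norm_sub_le_lipConstOn hg.2
  have hG0 : G 0 = g := iteratedDerivWithin_zero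
  have hgd : ∀ t ∈ Ioo α β, HasDerivAt g (G 1 t) t := fun t ht => by
    rw [← hG0]
    exact (hGd 0 (Nat.succ_pos k) t (Ioo_subset_Icc_self ht)).hasDerivAt (Icc_mem_nhds ht.1 ht.2)
  have hG1c : ContinuousOn (G 1) (Icc α β) :=
    hg.1.continuousOn_iteratedDerivWithin (by exact_mod_cast Nat.succ_pos k) (uniqueDiffOn_Icc hαβ)
  -- by continuity the essential supremum of `‖g'‖` is a pointwise bound
  have hGM : ∀ t ∈ Ioo α β, ‖G 1 t‖ ≤ M := by
    obtain ⟨B, hB⟩ := isCompact_Icc.exists_bound_of_continuousOn hG1c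
    have hfin : eLpNorm (deriv g) ⊤ (volume.restrict (Ioo α β)) ≠ ∞ := by
      rw [eLpNorm_exponent_top]
      refine (eLpNormEssSup_lt_top_of_ae_bound (C := B) ?_).ne
      filter_upwards [ae_restrict_mem measurableSet_Ioo] with t ht
      rw [(hgd t ht).deriv]
      exact hB t (Ioo_subset_Icc_self ht)
    have hae : ∀ᵐ t ∂volume.restrict (Ioo α β), ‖G 1 t‖ ≤ M := by
      filter_upwards [ae_restrict_mem measurableSet_Ioo,
        ae_le_eLpNormEssSup (f := deriv g) (μ := volume.restrict (Ioo α β))] with t ht h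
      rw [← eLpNorm_exponent_top, ← ENNReal.ofReal_toReal hfin, (hgd t ht).deriv,
        ← ofReal_norm] at h
      exact (ENNReal.ofReal_le_ofReal_iff hM0).1 h
    have hopen : IsOpen (Ioo α β ∩ (fun t => ‖G 1 t‖) ⁻¹' Ioi M) :=
      ((hG1c.mono Ioo_subset_Icc_self).norm).isOpen_inter_preimage isOpen_Ioo isOpen_Ioi
    have hnull : volume (Ioo α β ∩ (fun t => ‖G 1 t‖) ⁻¹' Ioi M) = 0 := by
      rw [ae_restrict_iff' measurableSet_Ioo] at hae
      refine measure_mono_null ?_ hae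
      intro t ht h
      exact absurd (h ht.1) (not_le.2 ht.2)
    have hempty := hopen.eq_empty_of_measure_zero hnull
    intro t ht
    by_contra! h
    exact (eq_empty_iff_forall_notMem.1 hempty t) ⟨ht, h⟩
  have hfd : ∀ t ∈ Ioo α β, f t ≠ 0 → HasDerivAt f (G 1 t / ((k + 2) * f t ^ (k + 1))) t := by
    intro t ht h0
    have := hasDerivAt_of_pow_eq (n := k + 1) (hf.continuousAt (isOpen_Ioo.mem_nhds ht))
      (by filter_upwards [isOpen_Ioo.mem_nhds ht] with s hs using hfg s hs) (hgd t ht) h0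
    convert this using 2
    push_cast; ring
  set D : ℝ := k + 2 with hD
  have hk0 : (0 : ℝ) ≤ k := k.cast_nonneg
  have hD1 : 0 < D - 1 := by linarith
  have hD0 : 0 < D := by linarith
  set S : ℝ := L ^ (1 / (D - 1)) * (β - α) + M ^ (1 / (D - 1)) with hS
  have hba : 0 < β - α := sub_pos.2 hαβ
  have hS0 : 0 ≤ S := by positivity
  have hlevel : ∀ r > 0, volume {t ∈ Ioo α β | r < ‖deriv f t‖} ≤
      ENNReal.ofReal (4 * D ^ 2 * S * r ^ (-(D / (D - 1)))) := by
    intro r hr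
    refine (volume_deriv_gt_le hαβ hL0 hM0 hr k G hGd hlip hGM (fun t ht => by
      rw [hG0]; exact hfg t ht) (fun t ht h0 => (hfd t ht h0).deriv)).trans
      (ENNReal.ofReal_le_ofReal (le_of_eq ?_))
    have h1 : r⁻¹ * (1 / r) ^ (1 / (D - 1)) = r ^ (-(D / (D - 1))) := by
      rw [one_div, Real.inv_rpow hr.le, ← Real.rpow_neg hr.le, ← Real.rpow_neg_one,
        ← Real.rpow_add hr]
      congr 1
      field_simp; ring
    rw [← h1, ← hS]
    ring
  constructor
  · refine absolutelyContinuousOn_of_integrable hf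
      (fun t ht h0 => (hfd t ht h0).differentiableAt) ?_
    refine integrableOn_of_volume_gt_le measurableSet_Ioo (by simp)
      (stronglyMeasurable_deriv f) (p := D / (D - 1)) ?_ hlevel
    rw [one_lt_div hD1]; linarith
  · unfold weakLpNorm
    refine iSup_le fun r => ?_
    rcases eq_or_lt_of_le (zero_le : 0 ≤ r) with rfl | hr
    · simp
    have hr' : (0 : ℝ) < r := hr
    set q : ℝ := (D - 1) / D with hq
    have hq0 : 0 < q := by positivity
    have hq1 : q ≤ 1 := by rw [hq, div_le_one hD0]; linarith
    rw [one_div_div]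
    refine (mul_le_mul_right (ENNReal.rpow_le_rpow (hlevel r hr') hq0.le) _).trans ?_
    rw [ENNReal.ofReal_rpow_of_nonneg (by positivity) hq0.le, ← ENNReal.ofReal_coe_nnreal,
      ← ENNReal.ofReal_mul hr'.le]
    refine ENNReal.ofReal_le_ofReal ?_
    set X := L ^ (1 / (D - 1)) * (β - α) with hX
    set Y := M ^ (1 / (D - 1)) with hY
    have hX0 : 0 ≤ X := by positivity
    have hY0 : 0 ≤ Y := by positivity
    have hXq : X ^ q = L ^ D⁻¹ * (β - α) ^ q := by
      rw [hX, Real.mul_rpow (by positivity) hba.le, ← Real.rpow_mul hL0]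
      congr 2
      rw [hq]; field_simp
    have hYq : Y ^ q = M ^ D⁻¹ := by
      rw [hY, ← Real.rpow_mul hM0]
      congr 1
      rw [hq]; field_simp
    have hmaxq : max X Y ^ q ≤ max (X ^ q) (Y ^ q) := by
      rcases max_cases X Y with ⟨h, _⟩ | ⟨h, _⟩ <;> rw [h]
      · exact le_max_left _ _
      · exact le_max_right _ _
    have hSmax : S ≤ 2 * max X Y := by
      rw [hS]; linarith [le_max_left X Y, le_max_right X Y]
    have hrr : (r : ℝ) * ((r : ℝ) ^ (-(D / (D - 1)))) ^ q = 1 := by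
      rw [← Real.rpow_mul hr'.le]
      have : -(D / (D - 1)) * q = -1 := by rw [hq]; field_simp
      rw [this, Real.rpow_neg_one, mul_inv_cancel₀ hr'.ne']
    have hmax0 : 0 ≤ max X Y := hX0.trans (le_max_left _ _)
    calc (r : ℝ) * (4 * D ^ 2 * S * (r : ℝ) ^ (-(D / (D - 1)))) ^ q
        = (4 * D ^ 2 * S) ^ q * ((r : ℝ) * ((r : ℝ) ^ (-(D / (D - 1)))) ^ q) := by
          rw [Real.mul_rpow (by positivity) (by positivity)]; ring
      _ = (4 * D ^ 2 * S) ^ q := by rw [hrr, mul_one]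
      _ ≤ ((8 * D ^ 2) * max X Y) ^ q := by
          refine Real.rpow_le_rpow (by positivity) ?_ hq0.le
          nlinarith [sq_nonneg D]
      _ = (8 * D ^ 2) ^ q * max X Y ^ q := Real.mul_rpow (by positivity) hmax0
      _ ≤ (8 * D ^ 2) * max (X ^ q) (Y ^ q) := by
          have h8 : (1 : ℝ) ≤ 8 * D ^ 2 := by nlinarith
          have : (8 * D ^ 2) ^ q ≤ 8 * D ^ 2 := by
            simpa using Real.rpow_le_rpow_of_exponent_le h8 hq1
          gcongr
      _ = _ := by rw [hXq, hYq]

/-- The theorem for `d = 1`: both conclusions only express that `f = g` is Lipschitz. -/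
lemma lipschitz_case {α β : ℝ} {f g : ℝ → ℂ}
    (hg : CkLipOn 0 g (Icc α β)) (hfg : ∀ t ∈ Ioo α β, f t = g t) :
    AbsolutelyContinuousOn f (Ioo α β) ∧
      eLpNorm (deriv f) ⊤ (volume.restrict (Ioo α β)) ≤
        ENNReal.ofReal (lipConstOn (iteratedDerivWithin 0 g (Icc α β)) (Icc α β)) := by
  have hlip := norm_sub_le_lipConstOn hg.2
  have hL0 := lipConstOn_nonneg (iteratedDerivWithin 0 g (Icc α β)) (Icc α β)
  set L := lipConstOn (iteratedDerivWithin 0 g (Icc α β)) (Icc α β)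
  have hf : ∀ x ∈ Ioo α β, ∀ y ∈ Ioo α β, ‖f x - f y‖ ≤ L * |x - y| := by
    intro x hx y hy
    rw [hfg x hx, hfg y hy]
    simpa [iteratedDerivWithin_zero] using
      hlip x (Ioo_subset_Icc_self hx) y (Ioo_subset_Icc_self hy)
  constructor
  · intro ε hε
    refine ⟨ε / (L + 1), by positivity, fun m a b hab hsub _ hsum => ?_⟩
    have hle : ∑ i, ‖f (b i) - f (a i)‖ ≤ (L + 1) * ∑ i, (b i - a i) := by
      rw [Finset.mul_sum]
      refine Finset.sum_le_sum fun i _ => ?_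
      have h0 := sub_nonneg.2 (hab i)
      refine (hf _ (hsub i (right_mem_Icc.2 (hab i))) _ (hsub i (left_mem_Icc.2 (hab i)))).trans ?_
      rw [abs_of_nonneg h0]
      gcongr; linarith
    refine hle.trans_lt ?_
    rw [lt_div_iff₀ (by positivity)] at hsum
    linarith
  · rw [eLpNorm_exponent_top]
    refine eLpNormEssSup_le_of_ae_bound ?_
    filter_upwards [ae_restrict_mem measurableSet_Ioo] with t ht
    refine norm_deriv_le_of_lip' hL0 ?_
    filter_upwards [isOpen_Ioo.mem_nhds ht] with s hs
    simpa using hf s hs t ht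

/-- **Absolute continuity of radicals (Ghisi–Gobbino).**
Let `d ≥ 1` and let `I = (α,β)` be a bounded open interval.  There is a constant `C(d)`
such that whenever `f : I → ℂ` is continuous and `f^d = g` on `I` for some
`g ∈ C^{d-1,1}(Ī)`, the function `f` is absolutely continuous on `I`, its derivative
belongs to the weak Lebesgue space `L^{d'}_w(I)` with `d' = d/(d-1)` (`d' = ∞` for
`d = 1`), and
`‖f′‖_{d',w,I} ≤ C(d) · max{ Lip_I(g^{(d-1)})^{1/d} · |I|^{1/d'}, ‖g′‖_{L^∞(I)}^{1/d} }`. -/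
theorem radicals_weakLp
    (d : ℕ) (hd : 1 ≤ d) :
    ∃ C : ℝ, 0 < C ∧
      ∀ α β : ℝ, α < β →
        ∀ f g : ℝ → ℂ,
          ContinuousOn f (Set.Ioo α β) →
          CkLipOn (d - 1) g (Set.Icc α β) →
          (∀ t ∈ Set.Ioo α β, f t ^ d = g t) →
          AbsolutelyContinuousOn f (Set.Ioo α β) ∧
          (if d = 1 then
              eLpNorm (deriv f) ⊤ (volume.restrict (Set.Ioo α β))
            else
              weakLpNorm ((d : ℝ) / ((d : ℝ) - 1)) (deriv f) (Set.Ioo α β)) ≤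
            ENNReal.ofReal
              (C * max
                ((lipConstOn (iteratedDerivWithin (d - 1) g (Set.Icc α β)) (Set.Icc α β)) ^
                    ((d : ℝ)⁻¹) *
                  (β - α) ^ (((d : ℝ) - 1) / d))
                ((eLpNorm (deriv g) ⊤ (volume.restrict (Set.Ioo α β))).toReal ^ ((d : ℝ)⁻¹))) := by
  rcases Nat.exists_eq_add_of_le' hd with ⟨n, rfl⟩
  rcases n with _ | k
  · refine ⟨1, one_pos, fun α β _ f g _ hg hfg => ?_⟩
    obtain ⟨h1, h2⟩ := lipschitz_case hg fun t ht => by simpa using hfg t ht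
    refine ⟨h1, ?_⟩
    rw [if_pos rfl, one_mul]
    refine h2.trans (ENNReal.ofReal_le_ofReal (le_max_of_le_left (le_of_eq ?_)))
    simp
  · refine ⟨8 * (k + 2 : ℝ) ^ 2, by positivity, fun α β hαβ f g hf hg hfg => ?_⟩
    have h := weakLp_aux k hαβ hf hg hfg
    rw [if_neg (by omega), show ((k + 1 + 1 : ℕ) : ℝ) = (k : ℝ) + 2 by push_cast; ring]
    exact h
end
end

section
/- Let G be a finite group, G ⟳ V a representation on a finite-dimensional complex vector space with homogeneous basic invariants σ = (σ_1,…,σ_n) of degrees d_j, d = max_j d_j. Let I be a bounded open interval, a = (a_1,…,a_n) ∈ C^{d−1,1}(Ī, ℂ^n) with values in σ(V), and for each j let â_j : I → ℂ be a continuous function with â_j^{d_j} = a_j (each â_j is absolutely continuous). Let t₀ ∈ I and k ∈ {1,…,n} satisfy |â_k(t₀)| = max_{1≤j≤n} |â_j(t₀)| ≠ 0, and assume Σ_{j=1}^n ‖â_j′‖_{L^1(I)} ≤ B |â_k(t₀)| for a constant 0 < B < 1/3. Then for all t ∈ I and all j = 1,…,n: (i) |â_j(t) − â_j(t₀)| ≤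 B |â_k(t₀)|; (ii) 2/3 < 1−B ≤ |â_k(t)/â_k(t₀)| ≤ 1+B < 4/3 (in particular a_k has no zero on I); (iii) |â_j(t)| ≤ (4/3)|â_k(t₀)| ≤ 2|â_k(t)|; and (iv) the length of the curve t ↦ ā(t) := ( (â_k(t)^{−1} â_1(t))^{d_1}, …, (â_k(t)^{−1} â_n(t))^{d_n} ) over I is at most 3 d² 2^d B. -/
/-!
The estimates rest on the bound `‖f y - f x‖ ≤ ∫ ‖f'‖` for absolutely continuous `f`
(`norm_sub_le_setIntegral`), obtained from the fundamental theorem of calculus applied to the real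
and imaginary parts.

Put `A = ‖â_k(t₀)‖` and let `S = ∑_j ‖â_j'‖`, so `∫_I S ≤ B A`. Integrating from `t₀` shows that
no `â_j` moves by more than `B A`, whence `‖â_j‖ ≤ (1 + B) A < 4A/3` and
`‖â_k‖ ≥ (1 - B) A > 2A/3` on `I`; this is (i)-(iii). In particular the quotients
`b_j = â_j / â_k` satisfy `‖b_j‖ ≤ 2`.

For the length, the quotient rule in difference form (`norm_div_sub_div_le`) gives
`‖b_j(y) - b_j(x)‖ ≤ (9 / (2A)) ∫_x^y S`, and `z ↦ z ^ m` is Lipschitz with constant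
`m 2^(m-1)` on the disc of radius `2` (`two_mul_norm_pow_sub_pow_le`). Hence every coordinate of
the reduced curve, and so the curve itself in the sup norm of `ℂ^n`, has increments at most
`(9 / (4A)) d 2^d ∫_x^y S`. These bounds are additive over adjacent intervals, so the variation is
at most `(9 / 4) d 2^d B ≤ 3 d² 2^d B`. The factor `n` never enters because the sum over `j` is
already inside `S`.
-/

open MeasureTheory Set
open scoped ENNReal NNReal

noncomputable section

lemma AbsolutelyContinuousOn.onInterval {f : ℝ → ℂ} {s : Set ℝ}
    (hf : AbsolutelyContinuousOn f s) {x y : ℝ} (hs : uIcc x y ⊆ s) :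
    AbsolutelyContinuousOnInterval f x y := by
  rw [absolutelyContinuousOnInterval_iff]
  intro ε hε
  obtain ⟨δ, hδ, H⟩ := hf ε hε
  refine ⟨δ, hδ, ?_⟩
  rintro ⟨m, E⟩ ⟨hE1, hE2⟩ hsum
  simp only [Finset.mem_range] at hE1 hsum
  -- The pairs of Mathlib's definition are unordered, so they are sorted by `min` and `max`.
  have := H m (fun i => min (E i).1 (E i).2) (fun i => max (E i).1 (E i).2)
    (fun i => min_le_max)
    (fun i => (uIcc_subset_uIcc (hE1 i i.2).1 (hE1 i i.2).2).trans hs)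
    (by
      intro i j hij
      have hd := hE2 (x := (i : ℕ)) (by simp) (y := (j : ℕ)) (by simp)
        (fun h => hij (Fin.ext h))
      exact Set.disjoint_iff_inter_eq_empty.mp
        (hd.mono Ioo_subset_Ioc_self Ioo_subset_Ioc_self))
    (by
      rw [Finset.sum_range] at hsum
      refine lt_of_eq_of_lt (Finset.sum_congr rfl fun i _ => ?_) hsum
      rw [max_sub_min_eq_abs', Real.dist_eq])
  rw [Finset.sum_range]
  refine lt_of_eq_of_lt (Finset.sum_congr rfl fun i _ => ?_) this
  rcases le_total (E i).1 (E i).2 with h | h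
  · simp [h, dist_eq_norm_sub']
  · simp [h, dist_eq_norm]

lemma AbsolutelyContinuousOnInterval.lipschitz_comp {X Y : Type*} [PseudoMetricSpace X]
    [PseudoMetricSpace Y] {f : ℝ → X} {x y : ℝ} (hf : AbsolutelyContinuousOnInterval f x y)
    {g : X → Y} (hg : LipschitzWith 1 g) :
    AbsolutelyContinuousOnInterval (fun t => g (f t)) x y := by
  rw [absolutelyContinuousOnInterval_iff] at hf ⊢
  intro ε hε
  obtain ⟨δ, hδ, H⟩ := hf ε hε
  refine ⟨δ, hδ, fun E hE h => lt_of_le_of_lt (Finset.sum_le_sum fun i _ => ?_) (H E hE h)⟩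
  simpa using hg.dist_le_mul (f (E.2 i).1) (f (E.2 i).2)

/-- An absolutely continuous complex-valued curve moves at most by the integral of the norm of its
derivative. -/
lemma norm_sub_le_setIntegral {f : ℝ → ℂ} {x y : ℝ} (hxy : x ≤ y)
    (hf : AbsolutelyContinuousOnInterval f x y)
    (hi : IntervalIntegrable (deriv f) volume x y) :
    ‖f y - f x‖ ≤ ∫ t in x..y, ‖deriv f t‖ := by
  have hre : AbsolutelyContinuousOnInterval (fun t => (f t).re) x y :=
    hf.lipschitz_comp (g := Complex.re)
      (LipschitzWith.of_dist_le_mul fun z w => by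
        simpa [Real.dist_eq, dist_eq_norm] using Complex.abs_re_le_norm (z - w))
  have him : AbsolutelyContinuousOnInterval (fun t => (f t).im) x y :=
    hf.lipschitz_comp (g := Complex.im)
      (LipschitzWith.of_dist_le_mul fun z w => by
        simpa [Real.dist_eq, dist_eq_norm] using Complex.abs_im_le_norm (z - w))
  -- Almost everywhere both parts are differentiable, hence so is `f`, and derivatives split.
  have hae : ∀ᵐ t, t ∈ uIcc x y →
      deriv (fun t => (f t).re) t = (deriv f t).re ∧
      deriv (fun t => (f t).im) t = (deriv f t).im := by
    filter_upwards [hre.ae_differentiableAt, him.ae_differentiableAt] with t h1 h2 ht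
    have e1 := (h1 ht).hasDerivAt
    have e2 := (h2 ht).hasDerivAt
    have e := e1.ofReal_comp.add (e2.ofReal_comp.mul_const Complex.I)
    have hfe : f = (fun t => ((f t).re : ℂ)) + fun t => ((f t).im : ℂ) * Complex.I := by
      funext s; simp [Complex.re_add_im]
    rw [← hfe] at e
    rw [e.deriv]
    simp
  have h1 : (∫ t in x..y, deriv f t).re = (f y - f x).re := by
    have := Complex.reCLM.intervalIntegral_comp_comm hi
    simp only [Complex.reCLM_apply] at this
    rw [← this, Complex.sub_re, ← hre.integral_deriv_eq_sub]
    refine intervalIntegral.integral_congr_ae ?_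
    filter_upwards [hae] with t ht h
    exact (ht (uIoc_subset_uIcc h)).1.symm
  have h2 : (∫ t in x..y, deriv f t).im = (f y - f x).im := by
    have := Complex.imCLM.intervalIntegral_comp_comm hi
    simp only [Complex.imCLM_apply] at this
    rw [← this, Complex.sub_im, ← him.integral_deriv_eq_sub]
    refine intervalIntegral.integral_congr_ae ?_
    filter_upwards [hae] with t ht h
    exact (ht (uIoc_subset_uIcc h)).2.symm
  rw [← Complex.ext h1 h2]
  exact intervalIntegral.norm_integral_le_integral_norm hxy

/-- Lipschitz bound for `z ↦ z ^ m` on the disc of radius `2`, multiplied by `2` to avoid the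
truncated exponent `m - 1`. -/
lemma two_mul_norm_pow_sub_pow_le {z w : ℂ} (hz : ‖z‖ ≤ 2) (hw : ‖w‖ ≤ 2) (m : ℕ) :
    2 * ‖z ^ m - w ^ m‖ ≤ m * 2 ^ m * ‖z - w‖ := by
  induction m with
  | zero => simp
  | succ m ih =>
    have e : z ^ (m + 1) - w ^ (m + 1) = z ^ m * (z - w) + (z ^ m - w ^ m) * w := by ring
    have h1 : ‖z ^ m * (z - w)‖ ≤ 2 ^ m * ‖z - w‖ := by
      rw [norm_mul, norm_pow]; gcongr
    have h2 : ‖(z ^ m - w ^ m) * w‖ ≤ ‖z ^ m - w ^ m‖ * 2 := by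
      rw [norm_mul]; gcongr
    have h3 := norm_add_le (z ^ m * (z - w)) ((z ^ m - w ^ m) * w)
    rw [e]
    push_cast
    rw [pow_succ]
    nlinarith

/-- Difference form of the quotient rule: `(p, q)` and `(p', q')` are values of a numerator and a
denominator at two points, with increments at most `D`. -/
lemma norm_div_sub_div_le {p q p' q' : ℂ} {A D : ℝ} (hA : 0 < A)
    (hq : 2 / 3 * A ≤ ‖q‖) (hq' : 2 / 3 * A ≤ ‖q'‖) (hb : ‖q⁻¹ * p‖ ≤ 2)
    (hp : ‖p' - p‖ ≤ D) (hqq : ‖q' - q‖ ≤ D) :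
    ‖q'⁻¹ * p' - q⁻¹ * p‖ ≤ 9 / (2 * A) * D := by
  have hq0 : q ≠ 0 := norm_pos_iff.mp (by linarith [mul_pos (two_pos : (0:ℝ) < 2) hA])
  have hq0' : q' ≠ 0 := norm_pos_iff.mp (by linarith [mul_pos (two_pos : (0:ℝ) < 2) hA])
  have e : q'⁻¹ * p' - q⁻¹ * p = q'⁻¹ * ((p' - p) - (q⁻¹ * p) * (q' - q)) := by
    field_simp
    ring
  have h1 : ‖q'⁻¹‖ ≤ 3 / (2 * A) := by
    rw [norm_inv, inv_le_comm₀ (by positivity) (by positivity)]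
    have e3 : (3 / (2 * A))⁻¹ = 2 / 3 * A := by rw [inv_div]; ring
    rw [e3]
    exact hq'
  have h2 : ‖(p' - p) - (q⁻¹ * p) * (q' - q)‖ ≤ 3 * D := by
    have h3 : ‖(q⁻¹ * p) * (q' - q)‖ ≤ 2 * D := by
      rw [norm_mul]; gcongr
    linarith [norm_sub_le (p' - p) ((q⁻¹ * p) * (q' - q))]
  rw [e, norm_mul]
  calc _ ≤ 3 / (2 * A) * (3 * D) := by gcongr
    _ = _ := by ring

/-- A curve whose increments are dominated by those of `Φ` has variation at most the largest
increment of `Φ`. -/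
lemma eVariationOn_le_of_dist_le {E : Type*} [PseudoMetricSpace E] {c : ℝ → E} {s : Set ℝ}
    {Φ : ℝ → ℝ} {C : ℝ}
    (h : ∀ x ∈ s, ∀ y ∈ s, x ≤ y → dist (c y) (c x) ≤ Φ y - Φ x)
    (hC : ∀ x ∈ s, ∀ y ∈ s, x ≤ y → Φ y - Φ x ≤ C) :
    eVariationOn c s ≤ ENNReal.ofReal C := by
  refine iSup_le ?_
  rintro ⟨m, u, hu, hus⟩
  have hi : ∀ i, dist (c (u (i + 1))) (c (u i)) ≤ Φ (u (i + 1)) - Φ (u i) :=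
    fun i => h _ (hus _) _ (hus _) (hu i.le_succ)
  calc ∑ i ∈ Finset.range m, edist (c (u (i + 1))) (c (u i))
      ≤ ∑ i ∈ Finset.range m, ENNReal.ofReal (Φ (u (i + 1)) - Φ (u i)) :=
        Finset.sum_le_sum fun i _ => by
          rw [edist_dist]; exact ENNReal.ofReal_le_ofReal (hi i)
    _ = ENNReal.ofReal (Φ (u m) - Φ (u 0)) := by
        rw [← ENNReal.ofReal_sum_of_nonneg fun i _ => dist_nonneg.trans (hi i),
          Finset.sum_range_sub (fun i => Φ (u i))]
    _ ≤ ENNReal.ofReal C :=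
        ENNReal.ofReal_le_ofReal (hC _ (hus _) _ (hus _) (hu m.zero_le))

/-- **Estimates for an admissible curve in `σ(V)` (Lemma on the reduced curve).**
Given admissible data `(a, I, t₀, k)` — `a ∈ C^{d-1,1}(Ī, ℂ^n)` with values in `σ(V)`,
continuous (absolutely continuous) selections `â_j` of `a_j^{1/d_j}`, `t₀ ∈ I`, `k` with
`|â_k(t₀)| = max_j |â_j(t₀)| ≠ 0`, and `Σ_j ‖â_j′‖_{L^1(I)} ≤ B |â_k(t₀)|` for some
`0 < B < 1/3` — one has, for all `t ∈ I` and all `j`: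
(i) `|â_j(t) - â_j(t₀)| ≤ B |â_k(t₀)|`;
(ii) `1-B ≤ |â_k(t)|/|â_k(t₀)| ≤ 1+B` (in particular `a_k` has no zero on `I`);
(iii) `|â_j(t)| ≤ (4/3)|â_k(t₀)| ≤ 2 |â_k(t)|`;
(iv) the length (total variation) of the curve
`t ↦ ((â_k⁻¹ â_1)^{d_1}, …, (â_k⁻¹ â_n)^{d_n})(t)` on `I` is at most `3 d² 2^d B`. -/
theorem reduced_curve_estimates
    {G : Type} [Group G] [Fintype G] {N n : ℕ}
    (ρ : Representation ℂ G (Fin N → ℂ))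
    (σ : Fin n → MvPolynomial (Fin N) ℂ)
    (dd : Fin n → ℕ) (d : ℕ)
    (hbasic : IsBasicInvariantSystem ρ σ)
    (hhom : ∀ j, (σ j).IsHomogeneous (dd j))
    (hdeg : ∀ j, 1 ≤ dd j)
    (hd : d = Finset.univ.sup dd)
    (α β : ℝ) (hαβ : α < β)
    (a : ℝ → Fin n → ℂ)
    (ha : ∀ j, CkLipOn (d - 1) (fun t => a t j) (Set.Icc α β))
    (hval : ∀ t ∈ Set.Icc α β, a t ∈ Set.range (polyMap σ))
    (ahat : Fin n → ℝ → ℂ)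
    (hroot : ∀ j, ∀ t ∈ Set.Ioo α β, ahat j t ^ dd j = a t j)
    (hcont : ∀ j, ContinuousOn (ahat j) (Set.Ioo α β))
    (hAC : ∀ j, AbsolutelyContinuousOn (ahat j) (Set.Ioo α β))
    (hInt : ∀ j, IntegrableOn (deriv (ahat j)) (Set.Ioo α β))
    (t₀ : ℝ) (ht₀ : t₀ ∈ Set.Ioo α β) (k : Fin n)
    (hmax : ∀ j, ‖ahat j t₀‖ ≤ ‖ahat k t₀‖) (hne : ahat k t₀ ≠ 0)
    (B : ℝ) (hB0 : 0 < B) (hB : B < 1 / 3)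
    (hsum : ∑ j, ∫ t in Set.Ioo α β, ‖deriv (ahat j) t‖ ≤ B * ‖ahat k t₀‖) :
    (∀ t ∈ Set.Ioo α β, ∀ j,
      ‖ahat j t - ahat j t₀‖ ≤ B * ‖ahat k t₀‖ ∧
      (1 - B ≤ ‖ahat k t‖ / ‖ahat k t₀‖ ∧ ‖ahat k t‖ / ‖ahat k t₀‖ ≤ 1 + B ∧ a t k ≠ 0) ∧
      (‖ahat j t‖ ≤ 4 / 3 * ‖ahat k t₀‖ ∧ 4 / 3 * ‖ahat k t₀‖ ≤ 2 * ‖ahat k t‖)) ∧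
    eVariationOn (fun t => fun j => ((ahat k t)⁻¹ * ahat j t) ^ dd j) (Set.Ioo α β) ≤
      ENNReal.ofReal (3 * (d : ℝ) ^ 2 * 2 ^ d * B) := by
  set A := ‖ahat k t₀‖ with hAdef
  have hA : 0 < A := norm_pos_iff.mpr hne
  set S : ℝ → ℝ := fun t => ∑ j, ‖deriv (ahat j) t‖ with hS
  have hSj : ∀ j t, ‖deriv (ahat j) t‖ ≤ S t := fun j t =>
    Finset.single_le_sum (f := fun j => ‖deriv (ahat j) t‖) (fun _ _ => norm_nonneg _)
      (Finset.mem_univ j)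
  have hS0 : ∀ t, 0 ≤ S t := fun t => Finset.sum_nonneg fun _ _ => norm_nonneg _
  have hSint : IntegrableOn S (Ioo α β) :=
    integrable_finsetSum _ fun j _ => (hInt j).norm
  have hSsum : ∫ t in Ioo α β, S t ≤ B * A := by
    rw [hS, integral_finsetSum _ fun j _ => (hInt j).norm]
    exact hsum
  have hsub : ∀ {x y}, x ∈ Ioo α β → y ∈ Ioo α β → uIcc x y ⊆ Ioo α β :=
    fun hx hy => ordConnected_Ioo.uIcc_subset hx hy
  have hSii : ∀ {x y}, x ∈ Ioo α β → y ∈ Ioo α β → IntervalIntegrable S volume x y :=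
    fun hx hy => (hSint.mono_set (hsub hx hy)).intervalIntegrable
  have hSle : ∀ {x y}, x ∈ Ioo α β → y ∈ Ioo α β → x ≤ y → ∫ t in x..y, S t ≤ B * A := by
    intro x y hx hy hxy
    rw [intervalIntegral.integral_of_le hxy]
    exact (setIntegral_mono_set hSint (Filter.Eventually.of_forall hS0)
      (Filter.Eventually.of_forall fun t ht =>
        hsub hx hy (uIoc_subset_uIcc (uIoc_of_le hxy ▸ ht)))).trans hSsum
  have hinc : ∀ j {x y}, x ∈ Ioo α β → y ∈ Ioo α β → x ≤ y →
      ‖ahat j y - ahat j x‖ ≤ ∫ t in x..y, S t := by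
    intro j x y hx hy hxy
    have hii : IntervalIntegrable (deriv (ahat j)) volume x y :=
      ((hInt j).mono_set (hsub hx hy)).intervalIntegrable
    exact (norm_sub_le_setIntegral hxy ((hAC j).onInterval (hsub hx hy)) hii).trans
      (intervalIntegral.integral_mono_on hxy hii.norm (hSii hx hy) fun t _ => hSj j t)
  have h1 : ∀ t ∈ Ioo α β, ∀ j, ‖ahat j t - ahat j t₀‖ ≤ B * A := by
    intro t ht j
    rcases le_total t₀ t with h | h
    · exact (hinc j ht₀ ht h).trans (hSle ht₀ ht h)
    · rw [norm_sub_rev]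
      exact (hinc j ht ht₀ h).trans (hSle ht ht₀ h)
  have hBA : B * A < 1 / 3 * A := by gcongr
  have hup : ∀ t ∈ Ioo α β, ∀ j, ‖ahat j t‖ ≤ A + B * A := fun t ht j => by
    linarith [h1 t ht j, hmax j, norm_sub_norm_le (ahat j t) (ahat j t₀)]
  have hlow : ∀ t ∈ Ioo α β, A - B * A ≤ ‖ahat k t‖ := fun t ht => by
    have := norm_sub_norm_le (ahat k t₀) (ahat k t)
    rw [norm_sub_rev] at this
    linarith [h1 t ht k]
  refine ⟨fun t ht j => ⟨h1 t ht j, ⟨?_, ?_, ?_⟩, ?_, ?_⟩, ?_⟩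
  · rw [le_div_iff₀ hA]; linarith [hlow t ht]
  · rw [div_le_iff₀ hA]; linarith [hup t ht k]
  · rw [← hroot k t ht]
    exact pow_ne_zero _ (norm_pos_iff.mp (by linarith [hlow t ht]))
  · linarith [hup t ht j]
  · linarith [hlow t ht]
  have hlow' : ∀ t ∈ Ioo α β, 2 / 3 * A ≤ ‖ahat k t‖ := fun t ht => by linarith [hlow t ht]
  have hb : ∀ t ∈ Ioo α β, ∀ j, ‖(ahat k t)⁻¹ * ahat j t‖ ≤ 2 := fun t ht j => by
    have hk : 0 < ‖ahat k t‖ := by linarith [hlow' t ht]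
    rw [norm_mul, norm_inv, inv_mul_le_iff₀ hk]
    linarith [hup t ht j, hlow' t ht]
  have hdj : ∀ j, dd j ≤ d := fun j => hd ▸ Finset.le_sup (Finset.mem_univ j)
  have hd1 : (1 : ℝ) ≤ d := by exact_mod_cast (hdeg k).trans (hdj k)
  set K : ℝ := (d : ℝ) * 2 ^ d * (9 / (4 * A)) with hK
  have hK0 : 0 ≤ K := by positivity
  have hdiff : ∀ {x y}, x ∈ Ioo α β → y ∈ Ioo α β →
      K * (∫ t in t₀..y, S t) - K * (∫ t in t₀..x, S t) = K * ∫ t in x..y, S t := by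
    intro x y hx hy
    rw [← intervalIntegral.integral_interval_sub_left (hSii ht₀ hy) (hSii ht₀ hx), mul_sub]
  refine eVariationOn_le_of_dist_le (Φ := fun t => K * ∫ s in t₀..t, S s) ?_ ?_
  · intro x hx y hy hxy
    rw [hdiff hx hy]
    have hI0 : 0 ≤ ∫ t in x..y, S t := intervalIntegral.integral_nonneg hxy fun t _ => hS0 t
    rw [dist_pi_le_iff (by positivity)]
    intro j
    rw [dist_eq_norm]
    have e1 := two_mul_norm_pow_sub_pow_le (hb y hy j) (hb x hx j) (dd j)
    have e2 := norm_div_sub_div_le hA (hlow' x hx) (hlow' y hy) (hb x hx j)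
      (hinc j hx hy hxy) (hinc k hx hy hxy)
    have e3 : (dd j : ℝ) * 2 ^ dd j ≤ d * 2 ^ d := by
      gcongr
      · exact hdj j
      · norm_num
      · exact hdj j
    have e4 := e1.trans (mul_le_mul e3 e2 (norm_nonneg _) (by positivity))
    calc _ ≤ ((d : ℝ) * 2 ^ d * (9 / (2 * A) * ∫ t in x..y, S t)) / 2 := by linarith
      _ = _ := by rw [hK]; field_simp; ring
  · intro x hx y hy hxy
    rw [hdiff hx hy]
    calc K * ∫ t in x..y, S t ≤ K * (B * A) := by
          gcongr
          exact hSle hx hy hxy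
      _ = 9 / 4 * (d * 1) * 2 ^ d * B := by rw [hK]; field_simp
      _ ≤ 3 * (d * d) * 2 ^ d * B := by gcongr; norm_num
      _ = _ := by ring
end
end

section
/- Let d be a positive integer, I a bounded open interval, and a = (a_1,…,a_n) ∈ C^{d−1,1}(Ī, ℂ^n) with continuous selections â_j of a_j^{1/d_j} (degrees d_j ≤ d), t₀ ∈ I and k satisfying: |â_k(t₀)| = max_j |â_j(t₀)| ≠ 0, Σ_j ‖â_j′‖_{L^1(I)} ≤ B |â_k(t₀)| with 0 < B < 1/3, and, for some constant C₀ and all j = 1,…,n and s = 1,…,d−1: ‖a_j^{(s)}‖_{L^∞(I)} ≤ C₀ |I|^{−s} |â_k(t₀)|^{d_j} and Lip_I(a_j^{(d−1)}) ≤ C₀ |I|^{−d} |â_k(t₀)|^{d_j}. Let ā(t) := ((â_k^{−1}â_1)^{d_1},…,(â_k^{−1}â_n)^{d_n})(t), let U ⊆ ℂ^n be open with ā(I) ⊆ U, let ψ : U → ℂ be analytic with ‖ψ‖_{C^d(Ū)} < ∞, let e be a positive integer with e ≤ d, and set b := â_k^e · (ψ ∘ ā) : I → ℂ. Then for all s =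 1,…,d−1: ‖b^{(s)}‖_{L^∞(I)} ≤ C |I|^{−s} |â_k(t₀)|^{e} and Lip_I(b^{(d−1)}) ≤ C |I|^{−d} |â_k(t₀)|^{e}, where C depends only on d, C₀, and ‖ψ‖_{C^d(Ū)}. -/
/-!
# Derivative bounds for a reduced curve

Write `I = (α, β)`, `L = |I|⁻¹`, `A = |â_k(t₀)|`. Everything rests on one class of functions: those
whose derivatives up to order `m` are bounded by `M L^s` and whose `m`-th derivative is Lipschitz
with constant `M L^(m+1)` (`GeomBound`, with `m = d - 1` in the application). The class is stable,
with explicit control of `M`, under products (`GeomBound.bilin`) and under composition with an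
analytic map with bounded derivatives (`GeomBound.comp`). The latter is an induction on
`(ψ ∘ c)' = (Dψ ∘ c) c'`; the operator norms of the iterated derivatives match the sup norm on
`ℂ^n`, which makes the constant independent of `n`.

Absolute continuity and the bound on the `L¹` norms of the derivatives give
`A / 2 ≤ |â_k| ≤ 2 A` and `|â_j| ≤ 2 A` on `I` (`AbsolutelyContinuousOn.norm_sub_le`), so each `a_j`
lies in the class with `M` a multiple of `A^{d_j}`. Since `â_k` is a nonvanishing continuous root of
`a_k`, it is locally a holomorphic function of `a_k`, and
`(â_k^p)' = (p / d_k) â_k^{p - d_k} a_k'`; by induction on the order, `â_k^p` is in the class with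
`M` a multiple of `A^p`, for every integer `p` (`exists_zpow_geomBound`). Hence the components
`â_k^{-d_j} a_j` of the reduced curve have bounds free of `A`, and `b = â_k^e (ψ ∘ ā)` has bounds
proportional to `A^e`. A local-to-global argument on the interval (`lipschitz_of_local`) yields the
final Lipschitz estimate; it is needed because `U` need not be convex.
-/

open MeasureTheory Set
open scoped ENNReal NNReal

noncomputable section

open Filter Topology

/-! ### Functions with geometrically growing derivatives -/

/-- `GeomBound I L m f M`: on `I` the function `f` is `m` times differentiable, with
`‖f^{(s)}‖ ≤ M L^s` for `s ≤ m`, and `f^{(m)}` is locally Lipschitz with constant `M L^{m+1}`.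
The derivatives are peeled off recursively, one at a time; the Lipschitz condition is only
required near each point of `I`, in the variable point `y`. -/
def GeomBound {E : Type*} [NormedAddCommGroup E] [NormedSpace ℝ E] (I : Set ℝ) (L : ℝ) :
    ℕ → (ℝ → E) → ℝ → Prop
  | 0, f, M => (∀ t ∈ I, ‖f t‖ ≤ M) ∧
      ∀ x ∈ I, ∀ᶠ y in 𝓝 x, ‖f y - f x‖ ≤ M * L * |y - x|
  | m + 1, f, M => (∀ t ∈ I, ‖f t‖ ≤ M) ∧
      ∃ f' : ℝ → E, (∀ t ∈ I, HasDerivAt f (f' t) t) ∧ GeomBound I L m f' (M * L)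

/-- A pointwise local Lipschitz estimate with a uniform constant on a convex subset of the line
is a global one. -/
lemma lipschitz_of_local {E : Type*} [NormedAddCommGroup E] {I : Set ℝ} (hc : Convex ℝ I)
    {f : ℝ → E} {K : ℝ}
    (h : ∀ x ∈ I, ∀ᶠ y in 𝓝 x, ‖f y - f x‖ ≤ K * |y - x|) :
    ∀ x ∈ I, ∀ y ∈ I, ‖f x - f y‖ ≤ K * |x - y| := by
  have cont : ∀ x ∈ I, ContinuousAt f x := by
    intro x hx
    rw [ContinuousAt, tendsto_iff_norm_sub_tendsto_zero]
    have h0 : Tendsto (fun y => K * |y - x|) (𝓝 x) (𝓝 0) := by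
      have : Continuous fun y : ℝ => K * |y - x| := by fun_prop
      simpa using this.tendsto x
    exact squeeze_zero' (Eventually.of_forall fun y => norm_nonneg _) (h x hx) h0
  have main : ∀ x ∈ I, ∀ y ∈ I, x ≤ y → ‖f y - f x‖ ≤ K * (y - x) := by
    intro x hx y hy hxy
    have hsub : Icc x y ⊆ I := hc.ordConnected.out hx hy
    refine image_le_of_liminf_slope_right_le_deriv_boundary (f := fun z => ‖f z - f x‖)
      (B := fun z => K * (z - x)) (B' := fun _ => K) (a := x) (b := y) ?_ (by simp) (by fun_prop)
      ?_ ?_ ⟨hxy, le_rfl⟩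
    · exact ContinuousOn.norm (ContinuousOn.sub
        (fun z hz => (cont z (hsub hz)).continuousWithinAt) continuousOn_const)
    · intro z _
      simpa using (((hasDerivAt_id z).sub_const x).const_mul K).hasDerivWithinAt
    · intro z hz r hr
      refine Eventually.frequently ?_
      filter_upwards [nhdsWithin_le_nhds (h z (hsub ⟨hz.1, hz.2.le⟩)), self_mem_nhdsWithin]
        with w hw hzw
      have hzw' : 0 < w - z := sub_pos.2 hzw
      rw [slope_def_field, div_lt_iff₀ hzw']
      rw [abs_of_pos hzw'] at hw
      have : ‖f w - f x‖ - ‖f z - f x‖ ≤ ‖f w - f z‖ := by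
        simpa using norm_sub_norm_le (f w - f x) (f z - f x)
      nlinarith
  intro x hx y hy
  rcases le_total x y with hxy | hxy
  · rw [norm_sub_rev, abs_sub_comm, abs_of_nonneg (sub_nonneg.2 hxy)]
    exact main x hx y hy hxy
  · rw [abs_of_nonneg (sub_nonneg.2 hxy)]
    exact main y hy x hx hxy

section Calculus

variable {E F G : Type*} [NormedAddCommGroup E] [NormedSpace ℝ E]
  [NormedAddCommGroup F] [NormedSpace ℝ F] [NormedAddCommGroup G] [NormedSpace ℝ G]
  {I : Set ℝ} {L : ℝ}

lemma GeomBound.bound {m : ℕ} {f : ℝ → E} {M : ℝ} (h : GeomBound I L m f M) :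
    ∀ t ∈ I, ‖f t‖ ≤ M := by
  cases m <;> exact h.1

lemma GeomBound.continuousAt {m : ℕ} {f : ℝ → E} {M : ℝ} (h : GeomBound I L m f M)
    {t : ℝ} (ht : t ∈ I) : ContinuousAt f t := by
  cases m with
  | zero =>
    rw [ContinuousAt, tendsto_iff_norm_sub_tendsto_zero]
    have h0 : Tendsto (fun y => M * L * |y - t|) (𝓝 t) (𝓝 0) := by
      have : Continuous fun y : ℝ => M * L * |y - t| := by fun_prop
      simpa using this.tendsto t
    exact squeeze_zero' (Eventually.of_forall fun y => norm_nonneg _) (h.2 t ht) h0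
  | succ m =>
    obtain ⟨-, f', hf', -⟩ := h
    exact (hf' t ht).continuousAt

lemma GeomBound.congr (hI : IsOpen I) {m : ℕ} {f g : ℝ → E} {M : ℝ} (h : GeomBound I L m f M)
    (hfg : ∀ t ∈ I, g t = f t) : GeomBound I L m g M := by
  cases m with
  | zero =>
    refine ⟨fun t ht => hfg t ht ▸ h.1 t ht, fun x hx => ?_⟩
    filter_upwards [h.2 x hx, hI.mem_nhds hx] with y hy hyI
    rw [hfg y hyI, hfg x hx]; exact hy
  | succ m =>
    obtain ⟨h1, f', hf', h2⟩ := h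
    refine ⟨fun t ht => hfg t ht ▸ h1 t ht, f', fun t ht => ?_, h2⟩
    exact (hf' t ht).congr_of_eventuallyEq
      (by filter_upwards [hI.mem_nhds ht] with y hy using hfg y hy)

lemma GeomBound.mono (hL : 0 ≤ L) {m : ℕ} {f : ℝ → E} {M M' : ℝ} (h : GeomBound I L m f M)
    (hM : M ≤ M') : GeomBound I L m f M' := by
  induction m generalizing f M M' with
  | zero =>
    refine ⟨fun t ht => (h.1 t ht).trans hM, fun x hx => ?_⟩
    filter_upwards [h.2 x hx] with y hy
    exact hy.trans (by gcongr)
  | succ m ih =>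
    obtain ⟨h1, f', hf', h2⟩ := h
    exact ⟨fun t ht => (h1 t ht).trans hM, f', hf', ih h2 (by gcongr)⟩

/-- Lowering the order: the Lipschitz bound at the top comes from the mean value inequality. -/
lemma GeomBound.of_succ (hI : IsOpen I) (hc : Convex ℝ I) {m : ℕ} {f : ℝ → E} {M : ℝ}
    (h : GeomBound I L (m + 1) f M) : GeomBound I L m f M := by
  induction m generalizing f M with
  | zero =>
    obtain ⟨h1, f', hf', h2⟩ := h
    refine ⟨h1, fun x hx => ?_⟩
    filter_upwards [hI.mem_nhds hx] with y hy
    exact hc.norm_image_sub_le_of_norm_hasDerivWithin_le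
      (fun t ht => (hf' t ht).hasDerivWithinAt) h2.bound hx hy
  | succ m ih =>
    obtain ⟨h1, f', hf', h2⟩ := h
    exact ⟨h1, f', hf', ih h2⟩

lemma GeomBound.add {m : ℕ} {f g : ℝ → E} {M N : ℝ} (hf : GeomBound I L m f M)
    (hg : GeomBound I L m g N) : GeomBound I L m (fun t => f t + g t) (M + N) := by
  induction m generalizing f g M N with
  | zero =>
    refine ⟨fun t ht => (norm_add_le _ _).trans (add_le_add (hf.1 t ht) (hg.1 t ht)),
      fun x hx => ?_⟩
    filter_upwards [hf.2 x hx, hg.2 x hx] with y h1 h2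
    calc ‖f y + g y - (f x + g x)‖ = ‖(f y - f x) + (g y - g x)‖ := by congr 1; abel
      _ ≤ _ := norm_add_le _ _
      _ ≤ _ := add_le_add h1 h2
      _ = _ := by ring
  | succ m ih =>
    obtain ⟨h1, f', hf', h2⟩ := hf
    obtain ⟨k1, g', hg', k2⟩ := hg
    refine ⟨fun t ht => (norm_add_le _ _).trans (add_le_add (h1 t ht) (k1 t ht)), _,
      fun t ht => (hf' t ht).add (hg' t ht), ?_⟩
    rw [add_mul]
    exact ih h2 k2

/-- Leibniz rule for a bilinear map of norm at most one. Each differentiation doubles the number of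
terms, hence the factor `2 ^ (m + 1)`. -/
lemma GeomBound.bilin (hI : IsOpen I) (hc : Convex ℝ I) (hL : 0 ≤ L) (T : E →L[ℝ] F →L[ℝ] G)
    (hT : ∀ x y, ‖T x y‖ ≤ ‖x‖ * ‖y‖) {m : ℕ} {f : ℝ → E} {g : ℝ → F} {M N : ℝ}
    (hM : 0 ≤ M) (hN : 0 ≤ N) (hf : GeomBound I L m f M) (hg : GeomBound I L m g N) :
    GeomBound I L m (fun t => T (f t) (g t)) (2 ^ (m + 1) * M * N) := by
  have key : ∀ {f : ℝ → E} {g : ℝ → F} {M N : ℝ}, 0 ≤ M → 0 ≤ N → ∀ (c : ℝ), 1 ≤ c →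
      (∀ t ∈ I, ‖f t‖ ≤ M) → (∀ t ∈ I, ‖g t‖ ≤ N) →
      ∀ t ∈ I, ‖T (f t) (g t)‖ ≤ c * M * N := by
    intro f g M N hM hN c hc h1 h2 t ht
    have := mul_le_mul (h1 t ht) (h2 t ht) (norm_nonneg _) hM
    nlinarith [hT (f t) (g t), mul_nonneg hM hN]
  induction m generalizing f g M N with
  | zero =>
    refine ⟨key hM hN _ (by norm_num) hf.1 hg.1, fun x hx => ?_⟩
    filter_upwards [hf.2 x hx, hg.2 x hx, hI.mem_nhds hx] with y h1 h2 hy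
    calc ‖T (f y) (g y) - T (f x) (g x)‖
        = ‖T (f y) (g y - g x) + T (f y - f x) (g x)‖ := by
          congr 1; simp only [map_sub, sub_apply]; abel
      _ ≤ ‖f y‖ * ‖g y - g x‖ + ‖f y - f x‖ * ‖g x‖ :=
          (norm_add_le _ _).trans (add_le_add (hT _ _) (hT _ _))
      _ ≤ M * (N * L * |y - x|) + (M * L * |y - x|) * N := by
          gcongr
          · exact hf.1 y hy
          · exact hg.1 x hx
      _ = _ := by ring
  | succ m ih =>
    have hf0 := hf.of_succ hI hc
    have hg0 := hg.of_succ hI hc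
    obtain ⟨h1, f', hf', h2⟩ := hf
    obtain ⟨k1, g', hg', k2⟩ := hg
    refine ⟨key hM hN _ (one_le_pow₀ (by norm_num)) h1 k1, _,
      fun t ht => T.hasDerivAt_of_bilinear (fun _ => hf' t ht) (fun _ => hg' t ht), ?_⟩
    have a1 := ih hM (mul_nonneg hN hL) hf0 k2
    have a2 := ih (mul_nonneg hM hL) hN h2 hg0
    convert a1.add a2 using 1
    ring

lemma GeomBound.mul (hI : IsOpen I) (hc : Convex ℝ I) (hL : 0 ≤ L) {m : ℕ} {f g : ℝ → ℂ}
    {M N : ℝ} (hM : 0 ≤ M) (hN : 0 ≤ N) (hf : GeomBound I L m f M) (hg : GeomBound I L m g N) :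
    GeomBound I L m (fun t => f t * g t) (2 ^ (m + 1) * M * N) :=
  GeomBound.bilin hI hc hL (ContinuousLinearMap.mul ℝ ℂ) (fun x y => by simp) hM hN hf hg

lemma GeomBound.const_mul {m : ℕ} {f : ℝ → ℂ} {M : ℝ} (c : ℂ)
    (hf : GeomBound I L m f M) : GeomBound I L m (fun t => c * f t) (‖c‖ * M) := by
  induction m generalizing f M with
  | zero =>
    refine ⟨fun t ht => ?_, fun x hx => ?_⟩
    · rw [norm_mul]; exact mul_le_mul_of_nonneg_left (hf.1 t ht) (norm_nonneg _)
    · filter_upwards [hf.2 x hx] with y hy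
      rw [← mul_sub, norm_mul, mul_assoc, mul_assoc]
      exact mul_le_mul_of_nonneg_left (by rwa [← mul_assoc]) (norm_nonneg _)
  | succ m ih =>
    obtain ⟨h1, f', hf', h2⟩ := hf
    refine ⟨fun t ht => ?_, _, fun t ht => (hf' t ht).const_mul c, ?_⟩
    · rw [norm_mul]; exact mul_le_mul_of_nonneg_left (h1 t ht) (norm_nonneg _)
    · rw [mul_assoc]; exact ih h2

lemma GeomBound.pi {ι : Type} [Fintype ι] (hL : 0 ≤ L) {m : ℕ} {f : ℝ → ι → ℂ} {M : ℝ}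
    (hM : 0 ≤ M) (h : ∀ i, GeomBound I L m (fun t => f t i) M) : GeomBound I L m f M := by
  induction m generalizing f M with
  | zero =>
    refine ⟨fun t ht => (pi_norm_le_iff_of_nonneg hM).2 fun i => (h i).1 t ht, fun x hx => ?_⟩
    filter_upwards [eventually_all.2 fun i => (h i).2 x hx] with y hy
    exact (pi_norm_le_iff_of_nonneg (by positivity)).2 hy
  | succ m ih =>
    have h2 := fun i => (h i).2
    choose f' hf' hb using h2
    refine ⟨fun t ht => (pi_norm_le_iff_of_nonneg hM).2 fun i => (h i).1 t ht,
      fun t i => f' i t, fun t ht => hasDerivAt_pi.2 fun i => hf' i t ht, ?_⟩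
    exact ih (by positivity) hb

/-- A tower `g 0, g 1, …, g m` of successive derivatives with geometric bounds. -/
lemma GeomBound.of_tower {m : ℕ} {g : ℕ → ℝ → E} {M : ℝ}
    (hd : ∀ s < m, ∀ t ∈ I, HasDerivAt (g s) (g (s + 1) t) t)
    (hb : ∀ s ≤ m, ∀ t ∈ I, ‖g s t‖ ≤ M * L ^ s)
    (hl : ∀ x ∈ I, ∀ᶠ y in 𝓝 x, ‖g m y - g m x‖ ≤ M * L ^ (m + 1) * |y - x|) :
    GeomBound I L m (g 0) M := by
  induction m generalizing g M with
  | zero => exact ⟨fun t ht => by simpa using hb 0 le_rfl t ht, by simpa using hl⟩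
  | succ m ih =>
    refine ⟨fun t ht => by simpa using hb 0 (Nat.zero_le _) t ht, g 1, hd 0 (Nat.succ_pos _), ?_⟩
    refine ih (g := fun s => g (s + 1)) (fun s hs => hd (s + 1) (by lia)) (fun s hs t ht => ?_) ?_
    · rw [mul_assoc, ← pow_succ']; exact hb (s + 1) (by lia) t ht
    · simpa only [mul_assoc, ← pow_succ'] using hl

lemma GeomBound.contDiffOn (hI : IsOpen I) {m : ℕ} {f : ℝ → E} {M : ℝ}
    (h : GeomBound I L m f M) : ContDiffOn ℝ m f I := by
  induction m generalizing f M with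
  | zero =>
    simp only [Nat.cast_zero, contDiffOn_zero]
    exact fun t ht => (h.continuousAt ht).continuousWithinAt
  | succ m ih =>
    obtain ⟨-, f', hf', h2⟩ := h
    push_cast
    refine (contDiffOn_succ_iff_deriv_of_isOpen hI).2
      ⟨fun t ht => (hf' t ht).differentiableAt.differentiableWithinAt, by simp, ?_⟩
    exact (ih h2).congr fun t ht => (hf' t ht).deriv

lemma GeomBound.iteratedDerivWithin_le (hI : IsOpen I) {m : ℕ} {f : ℝ → E}
    {M : ℝ} (h : GeomBound I L m f M) : ∀ s ≤ m, ∀ t ∈ I,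
      ‖iteratedDerivWithin s f I t‖ ≤ M * L ^ s := by
  induction m generalizing f M with
  | zero =>
    intro s hs t ht
    obtain rfl : s = 0 := by lia
    simpa using h.1 t ht
  | succ m ih =>
    obtain ⟨h1, f', hf', h2⟩ := h
    rintro (_ | s) hs t ht
    · simpa using h1 t ht
    · have : EqOn (derivWithin f I) f' I := fun u hu =>
        (hf' u hu).hasDerivWithinAt.derivWithin (hI.uniqueDiffWithinAt hu)
      rw [iteratedDerivWithin_succ', iteratedDerivWithin_congr this ht, pow_succ', ← mul_assoc]
      exact ih h2 s (by lia) t ht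

lemma GeomBound.lipschitz (hI : IsOpen I) (hc : Convex ℝ I) {m : ℕ} {f : ℝ → E}
    {M : ℝ} (h : GeomBound I L m f M) : ∀ x ∈ I, ∀ y ∈ I,
      ‖iteratedDerivWithin m f I x - iteratedDerivWithin m f I y‖ ≤
        M * L ^ (m + 1) * |x - y| := by
  induction m generalizing f M with
  | zero =>
    simpa using lipschitz_of_local hc h.2
  | succ m ih =>
    obtain ⟨h1, f', hf', h2⟩ := h
    intro x hx y hy
    have : EqOn (derivWithin f I) f' I := fun u hu =>
      (hf' u hu).hasDerivWithinAt.derivWithin (hI.uniqueDiffWithinAt hu)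
    rw [iteratedDerivWithin_succ', iteratedDerivWithin_congr this hx,
      iteratedDerivWithin_congr this hy, pow_succ', ← mul_assoc]
    exact ih h2 x hx y hy

end Calculus

/-! ### Composition with an analytic map -/

/-- The constant in the composition estimate `GeomBound.comp`. -/
def compConst (M : ℝ) : ℕ → ℝ
  | 0 => 1 + M
  | m + 1 => 1 + 2 ^ (m + 1) * compConst M m * M

lemma compConst_nonneg {M : ℝ} (hM : 0 ≤ M) (m : ℕ) : 0 ≤ compConst M m := by
  induction m with
  | zero => simp only [compConst]; positivity
  | succ m ih => simp only [compConst]; positivity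

/-- Faà di Bruno in recursive form: `(ψ ∘ c)' = (Dψ ∘ c) c'`, where `Dψ ∘ c` is controlled to one
order less. The target space has to vary because `Dψ` is operator valued. -/
lemma GeomBound.comp {E : Type} [NormedAddCommGroup E] [NormedSpace ℂ E] {I : Set ℝ} {L : ℝ}
    (hI : IsOpen I) (hc : Convex ℝ I) (hL : 0 ≤ L) {U : Set E} (hU : IsOpen U) {M N : ℝ}
    (hM : 0 ≤ M) (hN : 0 ≤ N) {c : ℝ → E} (hcU : ∀ t ∈ I, c t ∈ U) (m : ℕ) :
    ∀ {F : Type} [NormedAddCommGroup F] [NormedSpace ℂ F] {ψ : E → F},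
      AnalyticOnNhd ℂ ψ U →
      (∀ s ≤ m + 1, ∀ z ∈ U, ‖iteratedFDeriv ℂ s ψ z‖ ≤ N) →
      GeomBound I L m c M → GeomBound I L m (fun t => ψ (c t)) (compConst M m * N) := by
  induction m with
  | zero =>
    intro F _ _ ψ hψ hb h
    have h0 : ∀ z ∈ U, ‖ψ z‖ ≤ N := fun z hz => by simpa using hb 0 (by simp) z hz
    have h1 : ∀ z ∈ U, ‖fderiv ℂ ψ z‖ ≤ N := fun z hz => by
      simpa using hb 1 (by simp) z hz
    refine ⟨fun t ht => (h0 _ (hcU t ht)).trans ?_, fun x hx => ?_⟩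
    · simp only [compConst]; nlinarith [mul_nonneg hM hN]
    · obtain ⟨ε, hε, hball⟩ := Metric.isOpen_iff.1 hU (c x) (hcU x hx)
      filter_upwards [h.2 x hx, h.continuousAt hx (Metric.ball_mem_nhds _ hε)] with y hy hyb
      have := (convex_ball (c x) ε).norm_image_sub_le_of_norm_fderiv_le (𝕜 := ℂ) (f := ψ)
        (fun z hz => (hψ z (hball hz)).differentiableAt) (fun z hz => h1 z (hball hz))
        (Metric.mem_ball_self hε) hyb
      calc ‖ψ (c y) - ψ (c x)‖ ≤ N * ‖c y - c x‖ := this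
        _ ≤ N * (M * L * |y - x|) := by gcongr
        _ ≤ (1 + M) * N * L * |y - x| := by
            have : 0 ≤ N * (L * |y - x|) := by positivity
            nlinarith
  | succ m ih =>
    intro F _ _ ψ hψ hb h
    have h' := h.of_succ hI hc
    obtain ⟨-, c', hc', h2⟩ := h
    have h0 : ∀ z ∈ U, ‖ψ z‖ ≤ N := fun z hz => by simpa using hb 0 (by simp) z hz
    have hP := compConst_nonneg hM m
    refine ⟨fun t ht => (h0 _ (hcU t ht)).trans ?_,
      fun t => (fderiv ℂ ψ (c t)) (c' t), fun t ht => ?_, ?_⟩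
    · simp only [compConst]
      have : 0 ≤ 2 ^ (m + 1) * compConst M m * M * N := by positivity
      nlinarith
    · exact ((hψ _ (hcU t ht)).differentiableAt.hasFDerivAt.restrictScalars ℝ).comp_hasDerivAt t
        (hc' t ht)
    · have hψ' := hψ.fderiv_of_isOpen hU
      have key := ih hψ' (fun s hs z hz => by
        rw [norm_iteratedFDeriv_fderiv]; exact hb (s + 1) (by lia) z hz) h'
      have := GeomBound.bilin hI hc hL (ContinuousLinearMap.restrictScalarsL ℂ E F ℝ ℝ)
        (fun A v => A.le_opNorm v) (mul_nonneg hP hN) (mul_nonneg hM hL) key h2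
      refine this.mono hL ?_
      simp only [compConst]
      have h3 : 0 ≤ N * L := by positivity
      nlinarith

/-! ### Integer powers of a continuous root -/

lemma norm_zpow_le_of_mem {A : ℝ} (hA : 0 < A) {z : ℂ} (h1 : A / 2 ≤ ‖z‖) (h2 : ‖z‖ ≤ 2 * A)
    {R : ℕ} {p : ℤ} (hp : |p| ≤ R) : ‖z ^ p‖ ≤ 2 ^ R * A ^ p := by
  have key : ∃ n : ℕ, n ≤ R ∧ ‖z ^ p‖ ≤ 2 ^ n * A ^ p := by
    have hz : 0 < ‖z‖ := lt_of_lt_of_le (by positivity) h1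
    rcases Int.eq_nat_or_neg p with ⟨n, rfl | rfl⟩
    · refine ⟨n, by simpa using hp, ?_⟩
      rw [zpow_natCast, norm_pow, zpow_natCast, ← mul_pow]
      gcongr
    · refine ⟨n, by simpa using hp, ?_⟩
      rw [zpow_neg, zpow_natCast, norm_inv, norm_pow, zpow_neg, zpow_natCast, ← inv_pow, ← inv_pow,
        ← mul_pow]
      gcongr
      rw [inv_le_comm₀ hz (by positivity)]
      calc (2 * A⁻¹)⁻¹ = A / 2 := by field_simp
        _ ≤ _ := h1
  obtain ⟨n, hn, h⟩ := key
  exact h.trans (by gcongr; norm_num)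

/-- Near a point `x` where the continuous root `h` of `a` does not vanish, `h ^ p` is a
differentiable function of `a`. -/
lemma exists_local_root {h a : ℝ → ℂ} {x : ℝ} {D : ℕ} (hD : 1 ≤ D) (hh : ContinuousAt h x)
    (hx : h x ≠ 0) (hha : ∀ᶠ y in 𝓝 x, h y ^ D = a y) (p : ℤ) :
    ∃ G : ℂ → ℂ, HasStrictDerivAt G (p / D * h x ^ (p - D)) (a x) ∧
      ∀ᶠ y in 𝓝 x, h y ^ p = G (a y) := by
  have h1 : HasStrictDerivAt (fun z : ℂ => z ^ D) (D * h x ^ (D - 1)) (h x) :=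
    hasStrictDerivAt_pow D (h x)
  have hD0 : (D : ℂ) ≠ 0 := by exact_mod_cast (by lia : D ≠ 0)
  have h2 : (D : ℂ) * h x ^ (D - 1) ≠ 0 := mul_ne_zero hD0 (pow_ne_zero _ hx)
  have hax : h x ^ D = a x := hha.self_of_nhds
  have hinv := h1.eventually_left_inverse h2
  have h3 := h1.to_localInverse h2
  have h4 : HasStrictDerivAt (fun z : ℂ => z ^ p) (p * h x ^ (p - 1))
      (h1.localInverse _ _ _ h2 (h x ^ D)) := by
    rw [hinv.self_of_nhds]; exact hasStrictDerivAt_zpow p (h x) (Or.inl hx)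
  refine ⟨fun w => (h1.localInverse _ _ _ h2 w) ^ p, ?_, ?_⟩
  · have h5 := h4.comp (h x ^ D) h3
    rw [hax] at h5
    have hexp : h x ^ (p - D) = h x ^ (p - 1) * h x ^ (-((D - 1 : ℕ) : ℤ)) := by
      rw [← zpow_add₀ hx]; congr 1; push_cast [hD]; ring
    have hder : (p : ℂ) / D * h x ^ (p - D) =
        p * h x ^ (p - 1) * (D * h x ^ (D - 1))⁻¹ := by
      rw [hexp, mul_inv, zpow_neg, zpow_natCast]; ring
    rw [hder]
    exact h5
  · filter_upwards [hha, hh hinv] with y hy1 hy2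
    simp only [mem_preimage, mem_ofPred_eq] at hy2
    rw [← hy1, hy2]

/-- Integer powers of a continuous `D`-th root `h` of `a` inherit the derivative bounds of `a`,
through `(h^p)' = (p / D) h^(p - D) a'`. The induction on the order shifts the exponent, hence the
uniformity in `p`. -/
lemma exists_zpow_geomBound (d : ℕ) {K : ℝ} (hK : 0 ≤ K) (m : ℕ) : ∀ R : ℕ,
    ∃ C : ℝ, 0 ≤ C ∧ ∀ (I : Set ℝ), IsOpen I → Convex ℝ I → ∀ L : ℝ, 0 ≤ L →
      ∀ A : ℝ, 0 < A → ∀ D : ℕ, 1 ≤ D → D ≤ d → ∀ h a : ℝ → ℂ,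
      (∀ t ∈ I, ContinuousAt h t) → (∀ t ∈ I, h t ^ D = a t) →
      (∀ t ∈ I, A / 2 ≤ ‖h t‖) → (∀ t ∈ I, ‖h t‖ ≤ 2 * A) →
      GeomBound I L m a (K * A ^ D) → ∀ p : ℤ, |p| ≤ R →
      GeomBound I L m (fun t => h t ^ p) (C * A ^ p) := by
  have coef : ∀ {R D : ℕ} {p : ℤ}, 1 ≤ D → |p| ≤ R → ‖((p : ℂ) / D)‖ ≤ R := by
    intro R D p hD hp
    rw [norm_div, Complex.norm_intCast, Complex.norm_natCast]
    have h1 : |(p : ℝ)| ≤ R := by exact_mod_cast hp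
    have h2 : (1 : ℝ) ≤ D := by exact_mod_cast hD
    exact (div_le_self (abs_nonneg _) h2).trans h1
  have shift : ∀ {R D : ℕ} {p : ℤ}, D ≤ d → |p| ≤ R → |p - D| ≤ ((R + d : ℕ) : ℤ) := by
    intro R D p hD hp
    rw [abs_le] at hp ⊢
    push_cast
    constructor <;> lia
  induction m with
  | zero =>
    intro R
    -- The `+ 1` makes the bound on the derivative of the local inverse strict.
    refine ⟨2 ^ R + (R * 2 ^ (R + d) + 1) * K, by positivity, ?_⟩
    intro I hI _ L hL A hA D hD1 hDd h a hh hha hlo hhi ha p hp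
    have hAp : 0 < A ^ p := zpow_pos hA p
    refine ⟨fun t ht => (norm_zpow_le_of_mem hA (hlo t ht) (hhi t ht) hp).trans ?_, fun x hx => ?_⟩
    · gcongr
      have : 0 ≤ (R * 2 ^ (R + d) + 1) * K := by positivity
      linarith
    · have hx0 : h x ≠ 0 := by
        have := hlo x hx
        exact norm_pos_iff.1 (lt_of_lt_of_le (by positivity) this)
      obtain ⟨G, hG, hGh⟩ := exists_local_root hD1 (hh x hx) hx0
        (by filter_upwards [hI.mem_nhds hx] with y hy using hha y hy) p
      have hn : ‖(p / D * h x ^ (p - D) : ℂ)‖ ≤ R * (2 ^ (R + d) * A ^ (p - D)) := by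
        rw [norm_mul]
        exact mul_le_mul (coef hD1 hp) (norm_zpow_le_of_mem hA (hlo x hx) (hhi x hx) (shift hDd hp))
          (norm_nonneg _) (by positivity)
      have hpos : 0 < A ^ (p - D) := zpow_pos hA _
      have hK0 : 0 ≤ (R * 2 ^ (R + d) + 1) * A ^ (p - D) := by positivity
      obtain ⟨s, hs, hlip⟩ := hG.hasStrictFDerivAt.exists_lipschitzOnWith_of_nnnorm_lt
        ((R * 2 ^ (R + d) + 1) * A ^ (p - D)).toNNReal (by
          rw [← NNReal.coe_lt_coe, coe_nnnorm, Real.coe_toNNReal _ hK0]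
          refine lt_of_le_of_lt (b := ‖(p / D * h x ^ (p - D) : ℂ)‖) (by simp) ?_
          nlinarith)
      filter_upwards [hGh, (ha.continuousAt hx) hs, ha.2 x hx] with y h1 h2 h3
      rw [h1, hGh.self_of_nhds]
      have h4 := hlip.norm_sub_le h2 (mem_of_mem_nhds hs)
      rw [Real.coe_toNNReal _ hK0] at h4
      have hAA : A ^ (p - D) * A ^ D = A ^ p := by
        rw [← zpow_natCast, ← zpow_add₀ hA.ne']; congr 1; ring
      calc ‖G (a y) - G (a x)‖ ≤ (R * 2 ^ (R + d) + 1) * A ^ (p - D) * ‖a y - a x‖ := h4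
        _ ≤ (R * 2 ^ (R + d) + 1) * A ^ (p - D) * (K * A ^ D * L * |y - x|) := by gcongr
        _ = (R * 2 ^ (R + d) + 1) * K * (A ^ (p - D) * A ^ D) * L * |y - x| := by ring
        _ ≤ (2 ^ R + (R * 2 ^ (R + d) + 1) * K) * A ^ p * L * |y - x| := by
            rw [hAA]; gcongr
            have : (0 : ℝ) ≤ 2 ^ R := by positivity
            linarith
  | succ m ih =>
    intro R
    obtain ⟨C, hC, hCb⟩ := ih (R + d)
    refine ⟨2 ^ R + R * (2 ^ (m + 1) * C * K), by positivity, ?_⟩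
    intro I hI hc L hL A hA D hD1 hDd h a hh hha hlo hhi ha p hp
    have hAp : 0 < A ^ p := zpow_pos hA p
    have hpos : 0 < A ^ (p - D) := zpow_pos hA _
    have hAA : A ^ (p - D) * A ^ D = A ^ p := by
      rw [← zpow_natCast, ← zpow_add₀ hA.ne']; congr 1; ring
    have key := hCb I hI hc L hL A hA D hD1 hDd h a hh hha hlo hhi (ha.of_succ hI hc) (p - D)
      (shift hDd hp)
    obtain ⟨-, a', ha', h2⟩ := ha
    refine ⟨fun t ht => (norm_zpow_le_of_mem hA (hlo t ht) (hhi t ht) hp).trans ?_,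
      fun t => p / D * (h t ^ (p - D) * a' t), fun t ht => ?_, ?_⟩
    · gcongr
      have : 0 ≤ R * (2 ^ (m + 1) * C * K) := by positivity
      linarith
    · have ht0 : h t ≠ 0 := norm_pos_iff.1 (lt_of_lt_of_le (by positivity) (hlo t ht))
      obtain ⟨G, hG, hGh⟩ := exists_local_root hD1 (hh t ht) ht0
        (by filter_upwards [hI.mem_nhds ht] with y hy using hha y hy) p
      have := (hG.hasDerivAt.comp_of_eq t (ha' t ht) rfl).congr_of_eventuallyEq hGh
      rwa [mul_assoc] at this
    · have h3 := (GeomBound.mul hI hc hL (by positivity) (by positivity) key h2).const_mul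
        ((p : ℂ) / D)
      refine h3.mono hL ?_
      calc ‖((p : ℂ) / D)‖ * (2 ^ (m + 1) * (C * A ^ (p - D)) * (K * A ^ D * L))
          ≤ R * (2 ^ (m + 1) * (C * A ^ (p - D)) * (K * A ^ D * L)) := by
            gcongr; exact coef hD1 hp
        _ = R * (2 ^ (m + 1) * C * K) * (A ^ (p - D) * A ^ D) * L := by ring
        _ ≤ _ := by
            rw [hAA]; gcongr
            have : (0 : ℝ) ≤ 2 ^ R := by positivity
            linarith

/-! ### Oscillation of absolutely continuous functions -/

lemma AbsolutelyContinuousOn.comp_clm {f : ℝ → ℂ} {J : Set ℝ} (hJ : J.OrdConnected)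
    (hf : AbsolutelyContinuousOn f J) (T : ℂ →L[ℝ] ℝ) (hT : ∀ z, ‖T z‖ ≤ ‖z‖) {s t : ℝ}
    (hs : s ∈ J) (ht : t ∈ J) : AbsolutelyContinuousOnInterval (fun x => T (f x)) s t := by
  rw [absolutelyContinuousOnInterval_iff]
  intro ε hε
  obtain ⟨δ, hδ, H⟩ := hf ε hε
  refine ⟨δ, hδ, fun E hE hsum => ?_⟩
  obtain ⟨hE1, hE2⟩ := hE
  have hmem : ∀ i : Fin E.1, (E.2 i).1 ∈ J ∧ (E.2 i).2 ∈ J := fun i =>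
    ⟨hJ.uIcc_subset hs ht (hE1 i (by simp)).1, hJ.uIcc_subset hs ht (hE1 i (by simp)).2⟩
  have := H E.1 (fun i => min (E.2 i).1 (E.2 i).2) (fun i => max (E.2 i).1 (E.2 i).2)
    (fun i => min_le_max) (fun i => hJ.uIcc_subset (hmem i).1 (hmem i).2) ?_ ?_
  · refine lt_of_le_of_lt ?_ this
    rw [Finset.sum_range]
    refine Finset.sum_le_sum fun i _ => ?_
    rw [dist_eq_norm, ← map_sub]
    refine (hT _).trans ?_
    rcases le_total (E.2 i).1 (E.2 i).2 with h | h
    · rw [max_eq_right h, min_eq_left h, norm_sub_rev]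
    · rw [max_eq_left h, min_eq_right h]
  · intro i j hij
    have hd := hE2 (by simp : (i : ℕ) ∈ (Finset.range E.1 : Set ℕ))
      (by simp : (j : ℕ) ∈ (Finset.range E.1 : Set ℕ)) (fun h => hij (Fin.ext h))
    exact Set.disjoint_iff_inter_eq_empty.1
      (hd.mono (Set.Ioo_subset_Ioc_self) (Set.Ioo_subset_Ioc_self))
  · rw [Finset.sum_range] at hsum
    convert hsum using 2 with i
    rw [Real.dist_eq, max_sub_min_eq_abs, abs_sub_comm]

/-- The oscillation of an absolutely continuous function is at most the `L¹` norm of its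
derivative. The scalar fundamental theorem of calculus is applied to a real functional
norming `f t - f s`. -/
lemma AbsolutelyContinuousOn.norm_sub_le {f : ℝ → ℂ} {α β : ℝ}
    (hf : AbsolutelyContinuousOn f (Ioo α β)) (hint : IntegrableOn (deriv f) (Ioo α β))
    {s t : ℝ} (hs : s ∈ Ioo α β) (ht : t ∈ Ioo α β) :
    ‖f t - f s‖ ≤ ∫ x in Ioo α β, ‖deriv f x‖ := by
  obtain ⟨T, hT1, hTw⟩ := exists_dual_vector'' ℝ (f t - f s)
  have hT : ∀ z, ‖T z‖ ≤ ‖z‖ := fun z =>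
    (T.le_opNorm z).trans (mul_le_of_le_one_left (norm_nonneg _) hT1)
  have hac := hf.comp_clm ordConnected_Ioo T hT hs ht
  have hre := (hf.comp_clm ordConnected_Ioo Complex.reCLM
    (fun z => by simpa using Complex.abs_re_le_norm z) hs ht).ae_differentiableAt
  have him := (hf.comp_clm ordConnected_Ioo Complex.imCLM
    (fun z => by simpa using Complex.abs_im_le_norm z) hs ht).ae_differentiableAt
  have hsub : Set.uIoc s t ⊆ Ioo α β :=
    Set.uIoc_subset_uIcc.trans (ordConnected_Ioo.uIcc_subset hs ht)
  have hle : ∀ᵐ x ∂(volume.restrict (Set.uIoc s t)),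
      ‖deriv (fun x => T (f x)) x‖ ≤ ‖deriv f x‖ := by
    rw [ae_restrict_iff' measurableSet_uIoc]
    filter_upwards [hre, him] with x h1 h2 hx
    have hx' := Set.uIoc_subset_uIcc hx
    have hfd : DifferentiableAt ℝ f x := by
      have h3 := (Complex.ofRealCLM.differentiableAt.comp x (h1 hx')).add
        ((Complex.ofRealCLM.differentiableAt.comp x (h2 hx')).mul_const Complex.I)
      refine h3.congr_of_eventuallyEq (Eventually.of_forall fun y => ?_)
      simp
    have h4 : deriv (fun x => T (f x)) x = T (deriv f x) :=
      (T.hasFDerivAt.comp_hasDerivAt x hfd.hasDerivAt).deriv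
    rw [h4]
    exact hT _
  calc ‖f t - f s‖ = T (f t) - T (f s) := by rw [← map_sub, hTw]; rfl
    _ = ∫ x in s..t, deriv (fun x => T (f x)) x := hac.integral_deriv_eq_sub.symm
    _ ≤ ‖∫ x in s..t, deriv (fun x => T (f x)) x‖ := le_abs_self _
    _ ≤ ∫ x in Set.uIoc s t, ‖deriv (fun x => T (f x)) x‖ :=
        intervalIntegral.norm_integral_le_integral_norm_uIoc
    _ ≤ ∫ x in Set.uIoc s t, ‖deriv f x‖ :=
        integral_mono_of_nonneg (Eventually.of_forall fun _ => norm_nonneg _)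
          (hint.mono_set hsub).norm hle
    _ ≤ _ := setIntegral_mono_set hint.norm (Eventually.of_forall fun _ => norm_nonneg _)
        hsub.eventuallyLE

/-! ### From seminorm bounds on the closed interval -/

lemma le_lipConstOn {E : Type*} [NormedAddCommGroup E] {f : ℝ → E} {J : Set ℝ}
    (h : ∃ C : ℝ, 0 ≤ C ∧ ∀ x ∈ J, ∀ y ∈ J, ‖f x - f y‖ ≤ C * |x - y|) :
    ∀ x ∈ J, ∀ y ∈ J, ‖f x - f y‖ ≤ lipConstOn f J * |x - y| := by
  intro x hx y hy
  rcases eq_or_ne x y with rfl | hxy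
  · simp
  have hpos : 0 < |x - y| := abs_pos.2 (sub_ne_zero.2 hxy)
  rw [← div_le_iff₀ hpos]
  refine le_csInf h ?_
  rintro C ⟨-, hC⟩
  rw [div_le_iff₀ hpos]
  exact hC x hx y hy

lemma CkLipOn.geomBound {E : Type*} [NormedAddCommGroup E] [NormedSpace ℝ E] {m : ℕ} {f : ℝ → E}
    {α β : ℝ} (hαβ : α < β) (hf : CkLipOn m f (Icc α β)) {L M : ℝ}
    (hb : ∀ s ≤ m, ∀ t ∈ Ioo α β, ‖iteratedDerivWithin s f (Icc α β) t‖ ≤ M * L ^ s)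
    (hl : lipConstOn (iteratedDerivWithin m f (Icc α β)) (Icc α β) ≤ M * L ^ (m + 1)) :
    GeomBound (Ioo α β) L m f M := by
  have huniq := uniqueDiffOn_Icc hαβ
  have h := GeomBound.of_tower (I := Ioo α β) (L := L) (m := m) (M := M)
    (g := fun s => iteratedDerivWithin s f (Icc α β)) ?_ hb ?_
  · simpa using h
  · intro s hs t ht
    have hd := hf.1.differentiableOn_iteratedDerivWithin (m := s) (by exact_mod_cast hs) huniq t
      (Ioo_subset_Icc_self ht)
    have := hd.hasDerivWithinAt.hasDerivAt (Icc_mem_nhds ht.1 ht.2)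
    rwa [← iteratedDerivWithin_succ] at this
  · intro x hx
    filter_upwards [Ioo_mem_nhds hx.1 hx.2] with y hy
    refine (le_lipConstOn hf.2 y (Ioo_subset_Icc_self hy) x (Ioo_subset_Icc_self hx)).trans ?_
    gcongr

/-! ### The estimate for the reduced curve -/

/-- **Derivative bounds after reduction to a slice (pointwise estimates for `b`).**
Under the admissibility assumptions on `(a, I, t₀, k)` with the derivative bounds
`‖a_j^{(s)}‖_{L^∞(I)} ≤ C₀ |I|^{-s} |â_k(t₀)|^{d_j}` and
`Lip_I(a_j^{(d-1)}) ≤ C₀ |I|^{-d} |â_k(t₀)|^{d_j}`, if `ψ` is analytic on an open set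
`U` containing the image of the reduced curve `ā`, with all partial derivatives of order
`≤ d` bounded by `Cψ`, and `b := â_k^e · (ψ ∘ ā)` for some `1 ≤ e ≤ d`, then
`‖b^{(s)}‖_{L^∞(I)} ≤ C |I|^{-s} |â_k(t₀)|^{e}` for `s = 1,…,d-1`, and
`Lip_I(b^{(d-1)}) ≤ C |I|^{-d} |â_k(t₀)|^{e}`, where `C` depends only on `d`, `C₀` and
`Cψ`. -/
theorem slice_reduced_derivative_bounds
    (d : ℕ) (hd : 1 ≤ d) (C₀ Cψ : ℝ) (hC₀ : 0 ≤ C₀) (hCψ : 0 ≤ Cψ) :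
    ∃ C : ℝ, 0 < C ∧
      ∀ (n : ℕ) (dd : Fin n → ℕ), (∀ j, 1 ≤ dd j ∧ dd j ≤ d) →
      ∀ α β : ℝ, α < β →
      ∀ a : ℝ → Fin n → ℂ,
        (∀ j, CkLipOn (d - 1) (fun t => a t j) (Set.Icc α β)) →
      ∀ ahat : Fin n → ℝ → ℂ,
        (∀ j, ∀ t ∈ Set.Ioo α β, ahat j t ^ dd j = a t j) →
        (∀ j, ContinuousOn (ahat j) (Set.Ioo α β)) →
        (∀ j, AbsolutelyContinuousOn (ahat j) (Set.Ioo α β)) →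
        (∀ j, IntegrableOn (deriv (ahat j)) (Set.Ioo α β)) →
      ∀ t₀ ∈ Set.Ioo α β, ∀ k : Fin n,
        (∀ j, ‖ahat j t₀‖ ≤ ‖ahat k t₀‖) → ahat k t₀ ≠ 0 →
      ∀ B : ℝ, 0 < B → B < 1 / 3 →
        (∑ j, ∫ t in Set.Ioo α β, ‖deriv (ahat j) t‖) ≤ B * ‖ahat k t₀‖ →
        (∀ j, ∀ s : ℕ, 1 ≤ s → s ≤ d - 1 → ∀ t ∈ Set.Icc α β,
          ‖iteratedDerivWithin s (fun u => a u j) (Set.Icc α β) t‖ ≤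
            C₀ * (β - α) ^ (-(s : ℝ)) * ‖ahat k t₀‖ ^ dd j) →
        (∀ j, lipConstOn (iteratedDerivWithin (d - 1) (fun u => a u j) (Set.Icc α β))
            (Set.Icc α β) ≤ C₀ * (β - α) ^ (-(d : ℝ)) * ‖ahat k t₀‖ ^ dd j) →
      ∀ U : Set (Fin n → ℂ), IsOpen U →
        (∀ t ∈ Set.Ioo α β, (fun j => ((ahat k t)⁻¹ * ahat j t) ^ dd j) ∈ U) →
      ∀ ψ : (Fin n → ℂ) → ℂ, AnalyticOnNhd ℂ ψ U →
        (∀ s : ℕ, s ≤ d → ∀ z ∈ U, ‖iteratedFDerivWithin ℂ s ψ U z‖ ≤ Cψ) →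
      ∀ e : ℕ, 1 ≤ e → e ≤ d →
      ∀ b : ℝ → ℂ,
        (∀ t ∈ Set.Ioo α β,
          b t = ahat k t ^ e * ψ (fun j => ((ahat k t)⁻¹ * ahat j t) ^ dd j)) →
        ContDiffOn ℝ (d - 1) b (Set.Ioo α β) ∧
        (∀ s : ℕ, 1 ≤ s → s ≤ d - 1 → ∀ t ∈ Set.Ioo α β,
          ‖iteratedDerivWithin s b (Set.Ioo α β) t‖ ≤
            C * (β - α) ^ (-(s : ℝ)) * ‖ahat k t₀‖ ^ e) ∧
        lipConstOn (iteratedDerivWithin (d - 1) b (Set.Ioo α β)) (Set.Ioo α β) ≤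
          C * (β - α) ^ (-(d : ℝ)) * ‖ahat k t₀‖ ^ e := by
  have hm1 : d - 1 + 1 = d := by lia
  have hK : 0 ≤ 2 ^ d + C₀ := by positivity
  obtain ⟨C₁, hC₁, hpow⟩ := exists_zpow_geomBound d hK (d - 1) d
  set M₁ : ℝ := 2 ^ (d - 1 + 1) * C₁ * (2 ^ d + C₀) with hM₁
  have hM₁0 : 0 ≤ M₁ := by positivity
  have hP := compConst_nonneg hM₁0 (d - 1)
  refine ⟨2 ^ (d - 1 + 1) * C₁ * (compConst M₁ (d - 1) * Cψ) + 1, by positivity, ?_⟩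
  intro n dd hdd α β hαβ a haC ahat hroot hcont hac hint t₀ ht₀ k hmax hk B _ hB3 hBsum
    hder hlip U hU hUmem ψ hψ hψb e he1 hed b hb
  set A : ℝ := ‖ahat k t₀‖ with hA_def
  have hA : 0 < A := norm_pos_iff.2 hk
  set L : ℝ := (β - α)⁻¹ with hL_def
  have hL : 0 ≤ L := inv_nonneg.2 (sub_pos.2 hαβ).le
  have hIo : IsOpen (Ioo α β) := isOpen_Ioo
  have hIc : Convex ℝ (Ioo α β) := convex_Ioo α β
  have hrpow : ∀ s : ℕ, (β - α) ^ (-(s : ℝ)) = L ^ s := by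
    intro s
    rw [Real.rpow_neg (sub_pos.2 hαβ).le, Real.rpow_natCast, hL_def, inv_pow]
  simp only [hrpow] at hder hlip ⊢
  -- `B < 1 / 3` keeps every selection within `A / 3` of its value at `t₀`.
  have hosc : ∀ j, ∀ t ∈ Ioo α β, ‖ahat j t - ahat j t₀‖ ≤ A / 3 := by
    intro j t ht
    refine ((hac j).norm_sub_le (hint j) ht₀ ht).trans ?_
    have h1 := Finset.single_le_sum
      (f := fun j => ∫ t in Ioo α β, ‖deriv (ahat j) t‖)
      (fun i _ => integral_nonneg fun x => norm_nonneg _) (Finset.mem_univ j)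
    have h2 : B * A ≤ A / 3 := by nlinarith
    exact (h1.trans hBsum).trans h2
  have hhi : ∀ j, ∀ t ∈ Ioo α β, ‖ahat j t‖ ≤ 2 * A := by
    intro j t ht
    have h1 := hosc j t ht
    have h2 := norm_sub_norm_le (ahat j t) (ahat j t₀)
    have h3 := hmax j
    linarith
  have hlo : ∀ t ∈ Ioo α β, A / 2 ≤ ‖ahat k t‖ := by
    intro t ht
    have h1 := hosc k t ht
    have h2 := norm_sub_norm_le (ahat k t₀) (ahat k t)
    rw [norm_sub_rev] at h2
    linarith
  have hk0 : ∀ t ∈ Ioo α β, ahat k t ≠ 0 := fun t ht =>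
    norm_pos_iff.1 (lt_of_lt_of_le (by positivity) (hlo t ht))
  have hgeom : ∀ j, GeomBound (Ioo α β) L (d - 1) (fun t => a t j)
      ((2 ^ d + C₀) * A ^ dd j) := by
    intro j
    have h2d : (0 : ℝ) ≤ 2 ^ d := by positivity
    refine (haC j).geomBound hαβ ?_ ?_
    · intro s hs t ht
      rcases Nat.eq_zero_or_pos s with rfl | hs0
      · rw [iteratedDerivWithin_zero, ← hroot j t ht, norm_pow, pow_zero, mul_one]
        calc ‖ahat j t‖ ^ dd j ≤ (2 * A) ^ dd j := by
              gcongr; exact hhi j t ht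
          _ = 2 ^ dd j * A ^ dd j := mul_pow _ _ _
          _ ≤ 2 ^ d * A ^ dd j := by
              gcongr
              · norm_num
              · exact (hdd j).2
          _ ≤ _ := by gcongr; linarith
      · refine (hder j s hs0 hs t (Ioo_subset_Icc_self ht)).trans ?_
        have : 0 ≤ 2 ^ d * (L ^ s * A ^ dd j) := by positivity
        nlinarith
    · refine (hlip j).trans ?_
      rw [hm1]
      have : 0 ≤ 2 ^ d * (L ^ d * A ^ dd j) := by positivity
      nlinarith
  have hpk := hpow (Ioo α β) hIo hIc L hL A hA (dd k) (hdd k).1 (hdd k).2 (ahat k)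
    (fun t => a t k) (fun t ht => (hcont k).continuousAt (hIo.mem_nhds ht)) (hroot k) hlo (hhi k)
    (hgeom k)
  -- The reduced curve: its `j`-th component is `ahat k ^ (-dd j) * a j`.
  have hbar : GeomBound (Ioo α β) L (d - 1)
      (fun t j => ((ahat k t)⁻¹ * ahat j t) ^ dd j) M₁ := by
    refine GeomBound.pi hL hM₁0 fun j => ?_
    have h1 := hpk (-(dd j : ℤ)) (by simpa using (hdd j).2)
    have h2 := GeomBound.mul hIo hIc hL (by positivity) (by positivity) h1 (hgeom j)
    have h3 := h2.congr hIo (g := fun t => ((ahat k t)⁻¹ * ahat j t) ^ dd j) (fun t ht => by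
      rw [zpow_neg, zpow_natCast, mul_pow, inv_pow, hroot j t ht])
    convert h3 using 1
    rw [zpow_neg, zpow_natCast, hM₁]
    have : A ^ dd j ≠ 0 := by positivity
    field_simp
  have hcomp := GeomBound.comp hIo hIc hL hU hM₁0 hCψ hUmem (d - 1) hψ (fun s hs z hz => by
    have := hψb s (by lia) z hz
    rwa [iteratedFDerivWithin_of_isOpen s hU hz] at this) hbar
  have he := hpk e (by simpa using hed)
  have hprod := (GeomBound.mul hIo hIc hL (by positivity) (mul_nonneg hP hCψ) he hcomp).congr hIo
    (g := b) (fun t ht => by rw [hb t ht, zpow_natCast])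
  have hfin : GeomBound (Ioo α β) L (d - 1) b
      ((2 ^ (d - 1 + 1) * C₁ * (compConst M₁ (d - 1) * Cψ) + 1) * A ^ e) := by
    refine hprod.mono hL ?_
    rw [zpow_natCast]
    have : 0 ≤ A ^ e := by positivity
    linarith
  refine ⟨?_, ?_, ?_⟩
  · have := hfin.contDiffOn hIo
    convert this using 1
    rfl
  · intro s _ hs t ht
    have := hfin.iteratedDerivWithin_le hIo s hs t ht
    rwa [mul_right_comm] at this
  · have := hfin.lipschitz hIo hIc
    rw [mul_right_comm] at this
    rw [hm1] at this ⊢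
    exact csInf_le ⟨0, fun C hC => hC.1⟩ ⟨by positivity, this⟩
end
end
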